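/- arXiv:1909.09723 — 3 statements merged into one kernel-verified Lean document; each statement's English description precedes it below -/
import Mathlib

section
/- Let S be a semitopological semigroup and let (S,(K,‖·‖)) be a nonexpansive dynamical system, where K is a minimal weak* compact S-invariant subset of a dual Banach space X* and K is given the norm topology. Suppose μ is an S-invariant probability measure on the σ-algebra B₀(K,‖·‖) generated by the family of norm balls in K. If supp_‖·‖(μ) = {x ∈ K : μ({y ∈ K : ‖x − y‖ < ε}) > 0 for every ε > 0} is nonempty, then K is norm-compact. -/
open Set MeasureTheory

noncomputable section

universe u v

/-- A semitopological semigroup: multiplication is separately continuous. -/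
def IsSemitopologicalSemigroup (S : Type*) [Semigroup S] [TopologicalSpace S] : Prop :=
  (∀ t : S, Continuous fun s => t * s) ∧ (∀ t : S, Continuous fun s => s * t)

/-- The weak-star topology on the dual of a normed space: the topology of pointwise
convergence. -/
def wstarTop (X : Type*) [SeminormedAddCommGroup X] [NormedSpace ℝ X] :
    TopologicalSpace (StrongDual ℝ X) :=
  TopologicalSpace.induced (fun (f : StrongDual ℝ X) (x : X) => f x) Pi.topologicalSpace

/-- A set is totally bounded as soon as, for every radius, the traces on `K` of the closed balls
centred in it are measurable with measure bounded away from zero for a finite measure. -/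
theorem totallyBounded_of_le_measure_closedBall {α : Type*} [PseudoMetricSpace α]
    [MeasurableSpace α] (μ : Measure α) [IsFiniteMeasure μ] {T K : Set α}
    (hmeas : ∀ x ∈ T, ∀ ε : ℝ, MeasurableSet (K ∩ Metric.closedBall x ε))
    (hle : ∀ ε > 0, ∃ m > 0, ∀ x ∈ T, m ≤ μ (K ∩ Metric.closedBall x ε)) :
    TotallyBounded T := by
  rw [Metric.totallyBounded_iff]
  intro ε hε
  by_contra! hcover
  obtain ⟨m, hm, hmT⟩ := hle (ε / 3) (by positivity)
  have : Std.Symm fun x y : α => ε ≤ dist x y := ⟨fun x y h => by rwa [dist_comm]⟩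
  obtain ⟨u, huT, hu⟩ := exists_seq_of_forall_finset_exists' (fun x => x ∈ T)
    (fun x y => ε ≤ dist x y) (by
      intro t _
      obtain ⟨y, hyT, hy⟩ := Set.not_subset.1 (hcover t t.finite_toSet)
      refine ⟨y, hyT, fun x hx => ?_⟩
      by_contra! hlt
      exact hy (Set.mem_biUnion (Finset.mem_coe.2 hx) (by rwa [Metric.mem_ball, dist_comm])))
  have hfin := Measure.finite_const_le_meas_of_disjoint_iUnion μ hm
    (As := fun n => K ∩ Metric.closedBall (u n) (ε / 3))
    (fun n => hmeas _ (huT n) _)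
    (fun i j hij => (Metric.closedBall_disjoint_closedBall
      (by linarith [hu hij])).mono inter_subset_right inter_subset_right)
    (measure_ne_top μ _)
  exact Set.infinite_univ (hfin.subset fun n _ => hmT _ (huT n))

/-- The weak-star topology is coarser than the norm topology. -/
theorem norm_topology_le_wstarTop (X : Type*) [SeminormedAddCommGroup X] [NormedSpace ℝ X] :
    (inferInstance : TopologicalSpace (StrongDual ℝ X)) ≤ wstarTop X := by
  refine continuous_iff_le_induced.1 ?_
  fun_prop

/-- The weak-star topology is Hausdorff. -/
theorem t2Space_wstarTop (X : Type*) [SeminormedAddCommGroup X] [NormedSpace ℝ X] :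
    @T2Space _ (wstarTop X) :=
  letI := wstarTop X
  T2Space.of_injective_continuous (f := fun (f : StrongDual ℝ X) (x : X) => f x)
    DFunLike.coe_injective continuous_induced_dom

/-- **Lemma (banach)**: Let `(S,(K,‖·‖))` be a nonexpansive dynamical system, where `K` is a
minimal weak* compact `S`-invariant subset of a dual Banach space, and let `μ` be an
`S`-invariant probability measure on the σ-algebra `B₀(K,‖·‖)` generated by the norm balls of
`K`.  If the norm support of `μ` is nonempty then `K` is norm-compact. -/
theorem normCompact_of_invariant_measure_norm_support_nonempty
    {S : Type u} [Semigroup S] [TopologicalSpace S] [T2Space S]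
    (hS : IsSemitopologicalSemigroup S)
    {X : Type v} [NormedAddCommGroup X] [NormedSpace ℝ X] [CompleteSpace X]
    (K : Set (StrongDual ℝ X)) (π : S → StrongDual ℝ X → StrongDual ℝ X)
    -- `K` is a nonempty weak* compact set
    (hKne : K.Nonempty) (hKcpt : @IsCompact _ (wstarTop X) K)
    -- `(S,(K,‖·‖))` is a dynamical system (`K` carrying the norm topology)
    (hinv : ∀ s : S, MapsTo (π s) K K)
    (hact : ∀ s t : S, ∀ x ∈ K, π (s * t) x = π s (π t x))
    (horb : ∀ x ∈ K, Continuous fun s => π s x)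
    (htra : ∀ s : S, ContinuousOn (π s) K)
    -- the system is nonexpansive
    (hne : ∀ s : S, ∀ x ∈ K, ∀ y ∈ K, ‖π s x - π s y‖ ≤ ‖x - y‖)
    -- `K` is a minimal weak* compact `S`-invariant set
    (hmin : ∀ K' ⊆ K, K'.Nonempty → @IsCompact _ (wstarTop X) K' →
      (∀ s : S, MapsTo (π s) K' K') → K' = K)
    -- `μ` is an `S`-invariant probability measure on `B₀(K,‖·‖)`
    (μ : @Measure (StrongDual ℝ X)
      (MeasurableSpace.generateFrom {A | ∃ x ∈ K, ∃ r : ℝ, A = {y ∈ K | ‖x - y‖ ≤ r}}))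
    (hprob : @IsProbabilityMeasure _
      (MeasurableSpace.generateFrom {A | ∃ x ∈ K, ∃ r : ℝ, A = {y ∈ K | ‖x - y‖ ≤ r}}) μ)
    (hK1 : μ K = 1)
    (hμinv : ∀ s : S, ∀ A ⊆ K,
      @MeasurableSet _
        (MeasurableSpace.generateFrom {A | ∃ x ∈ K, ∃ r : ℝ, A = {y ∈ K | ‖x - y‖ ≤ r}}) A →
      μ {x ∈ K | π s x ∈ A} = μ A)
    -- the norm support of `μ` is nonempty
    (hsupp : ∃ x ∈ K, ∀ ε : ℝ, 0 < ε → 0 < μ {y ∈ K | ‖x - y‖ < ε}) :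
    -- then `K` is norm-compact
    IsCompact K := by
  have hKclosed : IsClosed K :=
    (@IsCompact.isClosed _ (wstarTop X) (t2Space_wstarTop X) _ hKcpt).mono
      (norm_topology_le_wstarTop X)
  obtain ⟨x, hxK, hx⟩ := hsupp
  set T : Set (StrongDual ℝ X) := insert x (range fun s => π s x)
  have hTK : T ⊆ K := insert_subset hxK (range_subset_iff.2 fun s => hinv s hxK)
  have hTinv (s : S) : MapsTo (π s) T T := by
    rintro _ (rfl | ⟨t, rfl⟩)
    · exact Or.inr ⟨s, rfl⟩
    · exact Or.inr ⟨s * t, hact s t x hxK⟩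
  have hball (y : StrongDual ℝ X) (r : ℝ) :
      K ∩ Metric.closedBall y r = {z ∈ K | ‖y - z‖ ≤ r} := by
    ext z
    simp [dist_eq_norm_sub']
  have hmeas (y : StrongDual ℝ X) (hy : y ∈ K) (r : ℝ) :
      @MeasurableSet _ (MeasurableSpace.generateFrom
        {A | ∃ x ∈ K, ∃ r : ℝ, A = {y ∈ K | ‖x - y‖ ≤ r}}) {z ∈ K | ‖y - z‖ ≤ r} :=
    MeasurableSpace.measurableSet_generateFrom ⟨y, hy, r, rfl⟩
  have hTtb : TotallyBounded T := by
    refine @totallyBounded_of_le_measure_closedBall _ _ (MeasurableSpace.generateFrom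
      {A | ∃ x ∈ K, ∃ r : ℝ, A = {y ∈ K | ‖x - y‖ ≤ r}}) μ
      ⟨hprob.measure_univ.trans_lt ENNReal.one_lt_top⟩ T K ?_ ?_
    · intro y hy r
      rw [hball]
      exact hmeas y (hTK hy) r
    · intro ε hε
      refine ⟨_, hx ε hε, ?_⟩
      rintro _ (rfl | ⟨s, rfl⟩)
      · rw [hball]
        exact measure_mono fun z hz => ⟨hz.1, hz.2.le⟩
      · rw [hball, ← hμinv s _ (fun z hz => hz.1) (hmeas _ (hinv s hxK) ε)]
        exact measure_mono fun z hz =>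
          ⟨hz.1, hinv s hz.1, (hne s x hxK z hz.1).trans hz.2.le⟩
  have hclK : closure T ⊆ K := closure_minimal hTK hKclosed
  have hcl : IsCompact (closure T) := hTtb.closure.isCompact_of_isClosed isClosed_closure
  have hclw : @IsCompact _ (wstarTop X) (closure T) := by
    have h := @IsCompact.image _ _ _ (wstarTop X) _ id hcl
      (continuous_id_iff_le.2 (norm_topology_le_wstarTop X))
    rwa [image_id] at h
  have heq : closure T = K := hmin _ hclK ⟨x, subset_closure (mem_insert _ _)⟩ hclw
    fun s => (hTinv s).closure_of_continuousOn ((htra s).mono hclK)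
  exact heq ▸ hcl
end
end

section
/- Let C be a bounded convex L-embedded subset of a Banach space X and let (S,(C,weak)) be a nonexpansive dynamical system whose action S × C → C is jointly continuous when C carries the weak topology. If LUC(S) has a left invariant mean and C contains a bounded subset A such that s(A) = A for all s ∈ S, then there is a point x in the Chebyshev center E_C(A) with sx = x for all s ∈ S. -/
open Set MeasureTheory BoundedContinuousFunction

noncomputable section

universe u v

/-- The weak topology on a topological module `X` over `𝕜`: the coarsest topology making all
continuous linear functionals continuous. -/
def weakTop (𝕜 : Type*) (X : Type*) [NontriviallyNormedField 𝕜] [AddCommGroup X]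
    [Module 𝕜 X] [TopologicalSpace X] : TopologicalSpace X :=
  ⨅ f : X →L[𝕜] 𝕜, TopologicalSpace.induced (⇑f) inferInstance

section CbDefs

variable (S : Type u) [Semigroup S] [TopologicalSpace S]

/-- `g` is the family of left translates of `f`: `g s = L_s f` where `L_s f (t) = f (s * t)`. -/
def IsLTranslates (f : S →ᵇ ℂ) (g : S → S →ᵇ ℂ) : Prop :=
  ∀ s t, g s t = f (s * t)

/-- `LUC(S)`: bounded continuous `f` such that `s ↦ L_s f` is norm continuous. -/
def LUCset : Set (S →ᵇ ℂ) :=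
  {f | ∃ g, IsLTranslates S f g ∧ Continuous g}

/-- `AP(S)`: bounded continuous `f` whose set of left translates is relatively compact in the
norm topology of `C(S)`. -/
def APset : Set (S →ᵇ ℂ) :=
  {f | ∃ g, IsLTranslates S f g ∧ IsCompact (closure (Set.range g))}

/-- `WAP(S)`: bounded continuous `f` whose set of left translates is relatively compact in the
weak topology of `C(S)`. -/
def WAPset : Set (S →ᵇ ℂ) :=
  {f | ∃ g, IsLTranslates S f g ∧
    @IsCompact _ (weakTop ℂ (S →ᵇ ℂ)) (@closure _ (weakTop ℂ (S →ᵇ ℂ)) (Set.range g))}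

/-- The topology on `C(S)` induced by the multiplicative means. -/
def lmcTop : TopologicalSpace (S →ᵇ ℂ) :=
  ⨅ μ : {μ : (S →ᵇ ℂ) →L[ℂ] ℂ // ‖μ‖ = 1 ∧ μ 1 = 1 ∧ ∀ f g, μ (f * g) = μ f * μ g},
    TopologicalSpace.induced (⇑μ.1) inferInstance

/-- `LMC(S)`: bounded continuous `f` such that `s ↦ L_s f` is continuous into `C(S)` with the
topology induced by the multiplicative means. -/
def LMCset : Set (S →ᵇ ℂ) :=
  {f | ∃ g, IsLTranslates S f g ∧ @Continuous _ _ _ (lmcTop S) g}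

/-- `Y ⊆ C(S)` has a left invariant mean: there is a norm-one functional `μ` on `C(S)` with
`μ 1 = 1` and `μ (L_s f) = μ f` for all `f ∈ Y` and `s ∈ S`.  (By the Hahn–Banach extension
theorem this is equivalent to the existence of a left invariant mean on the subspace `Y`.) -/
def HasLIM (Y : Set (S →ᵇ ℂ)) : Prop :=
  ∃ μ : (S →ᵇ ℂ) →L[ℂ] ℂ, ‖μ‖ = 1 ∧ μ 1 = 1 ∧
    ∀ f ∈ Y, ∀ g : S → S →ᵇ ℂ, IsLTranslates S f g → ∀ s, μ (g s) = μ f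

end CbDefs

/-- A subset `C` of a Banach space `X` is `L`-embedded if there is a closed subspace `Xs` of
`X**` with `X ⊕₁ Xs ⊆ X**` and such that the weak* closure of `C` in `X**` is contained in
`C ⊕₁ Xs`. -/
def LEmbeddedSet {X : Type v} [NormedAddCommGroup X] [NormedSpace ℝ X] (C : Set X) : Prop :=
  ∃ Xs : Submodule ℝ (StrongDual ℝ (StrongDual ℝ X)),
    IsClosed (Xs : Set (StrongDual ℝ (StrongDual ℝ X))) ∧
    (∀ x : X, ∀ ξ ∈ Xs,
      ‖NormedSpace.inclusionInDoubleDual ℝ X x + ξ‖ =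
        ‖NormedSpace.inclusionInDoubleDual ℝ X x‖ + ‖ξ‖) ∧
    (@closure _ (wstarTop (StrongDual ℝ X))
        (NormedSpace.inclusionInDoubleDual ℝ X '' C) ⊆
      {z | ∃ c ∈ C, ∃ ξ ∈ Xs, z = NormedSpace.inclusionInDoubleDual ℝ X c + ξ})

/-- The Chebyshev radius of `A` in `C`. -/
def chebyshevRadius {X : Type v} [NormedAddCommGroup X] (C A : Set X) : ℝ :=
  ⨅ x : C, ⨆ y : A, ‖(x : X) - y‖

/-- The Chebyshev center of `A` in `C`. -/
def chebyshevCenter {X : Type v} [NormedAddCommGroup X] (C A : Set X) : Set X :=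
  {x ∈ C | (⨆ y : A, ‖x - (y : X)‖) = chebyshevRadius C A}

section WeaklyContinuous

variable {X : Type*} [NormedAddCommGroup X] [NormedSpace ℝ X]
  {T : Type*} [TopologicalSpace T] {ι : T → X}

/-- Mazur: a weakly continuous map pulls norm-closed convex sets back to closed sets. -/
theorem isClosed_preimage_of_convex (hι : ∀ f : StrongDual ℝ X, Continuous fun t => f (ι t))
    {B : Set X} (hB : Convex ℝ B) (hBc : IsClosed B) : IsClosed (ι ⁻¹' B) := by
  rw [← isOpen_compl_iff, isOpen_iff_forall_mem_open]
  intro t ht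
  obtain ⟨f, u, hfu, hfB⟩ := geometric_hahn_banach_point_closed hB hBc ht
  exact ⟨{t' | f (ι t') < u}, fun t' ht' hB' => lt_asymm ht' (hfB _ hB'),
    isOpen_lt (hι f) continuous_const, hfu⟩

/-- A nonempty open set of large oscillation contains two open sets that are uniformly separated
in norm. -/
theorem exists_isOpen_pair_separated [T2Space T] [CompactSpace T]
    (hι : ∀ f : StrongDual ℝ X, Continuous fun t => f (ι t)) {ε : ℝ} {U : Set T} (hU : IsOpen U)
    {x y : T} (hx : x ∈ U) (hy : y ∈ U) (hxy : ε < ‖ι x - ι y‖) :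
    ∃ V : Bool → Set T, (∀ b, IsOpen (V b) ∧ (V b).Nonempty ∧ closure (V b) ⊆ U) ∧
      ∀ p ∈ closure (V true), ∀ q ∈ closure (V false), ε ≤ ‖ι p - ι q‖ := by
  obtain ⟨f, hf1, hf⟩ := exists_dual_vector'' ℝ (ι x - ι y)
  simp only [map_sub, RCLike.ofReal_real_eq_id, id_eq] at hf
  set δ := (f (ι x) - f (ι y) - ε) / 2 with hδ
  have hδ0 : 0 < δ := by rw [hδ]; linarith
  have key : ∀ z ∈ U, ∀ W : Set T, IsOpen W → z ∈ W →
      ∃ V : Set T, (IsOpen V ∧ V.Nonempty ∧ closure V ⊆ U) ∧ closure V ⊆ W := by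
    intro z hz W hW hzW
    obtain ⟨F, hF, hFc, hFs⟩ := exists_mem_nhds_isClosed_subset ((hU.inter hW).mem_nhds ⟨hz, hzW⟩)
    have hcl : closure (interior F) ⊆ U ∩ W :=
      (closure_minimal interior_subset hFc).trans hFs
    exact ⟨interior F, ⟨isOpen_interior, ⟨z, mem_interior_iff_mem_nhds.2 hF⟩,
      hcl.trans inter_subset_left⟩, hcl.trans inter_subset_right⟩
  obtain ⟨V₁, hV₁, hV₁'⟩ := key x hx {t | f (ι x) - δ < f (ι t)}
    (isOpen_lt continuous_const (hι f)) (by simp [hδ0])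
  obtain ⟨V₂, hV₂, hV₂'⟩ := key y hy {t | f (ι t) < f (ι y) + δ}
    (isOpen_lt (hι f) continuous_const) (by simp [hδ0])
  refine ⟨fun b => bif b then V₁ else V₂, ?_, ?_⟩
  · rintro (_ | _)
    exacts [hV₂, hV₁]
  · intro p hp q hq
    have h1 : f (ι x) - δ < f (ι p) := hV₁' hp
    have h2 : f (ι q) < f (ι y) + δ := hV₂' hq
    have h3 : f (ι p - ι q) ≤ ‖ι p - ι q‖ :=
      (le_abs_self _).trans ((f.le_opNorm _).trans (mul_le_of_le_one_left (norm_nonneg _) hf1))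
    rw [map_sub] at h3
    linarith

/-- The node reached by following the branch `σ` of the binary tree for `n` steps. -/
def branchNode (σ : ℕ → Bool) : ℕ → List Bool
  | 0 => []
  | n + 1 => σ n :: branchNode σ n

theorem branchNode_congr {σ τ : ℕ → Bool} {n : ℕ} (h : ∀ m < n, σ m = τ m) :
    branchNode σ n = branchNode τ n := by
  induction n with
  | zero => rfl
  | succ n ih =>
    rw [branchNode, branchNode, h n n.lt_succ_self, ih fun m hm => h m (hm.trans n.lt_succ_self)]

/-- Norm fragmentability of weakly compact sets: some nonempty open set has small norm diameter. -/
theorem exists_isOpen_norm_sub_le [T2Space T] [CompactSpace T] [Nonempty T]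
    (hι : ∀ f : StrongDual ℝ X, Continuous fun t => f (ι t)) {ε : ℝ} (hε : 0 < ε) :
    ∃ U : Set T, IsOpen U ∧ U.Nonempty ∧ ∀ x ∈ U, ∀ y ∈ U, ‖ι x - ι y‖ ≤ ε := by
  by_contra! H
  have step : ∀ U : {U : Set T // IsOpen U ∧ U.Nonempty},
      ∃ V : Bool → {U : Set T // IsOpen U ∧ U.Nonempty}, (∀ b, closure (V b).1 ⊆ U.1) ∧
        ∀ p ∈ closure (V true).1, ∀ q ∈ closure (V false).1, ε ≤ ‖ι p - ι q‖ := by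
    rintro ⟨U, hU, hUne⟩
    obtain ⟨x, hx, y, hy, hxy⟩ := H U hU hUne
    obtain ⟨V, hV, hsep⟩ := exists_isOpen_pair_separated hι hU hx hy hxy
    exact ⟨fun b => ⟨V b, (hV b).1, (hV b).2.1⟩, fun b => (hV b).2.2, hsep⟩
  choose V hVsub hVsep using step
  let node : List Bool → {U : Set T // IsOpen U ∧ U.Nonempty} := fun l =>
    l.rec ⟨univ, isOpen_univ, univ_nonempty⟩ fun b _ U => V U b
  choose x hx using fun l => (node l).2.2
  have hlim : ∀ σ : ℕ → Bool,
      (⋂ n, closure (node (branchNode σ n)).1 ∩ closure (range x)).Nonempty := by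
    intro σ
    apply IsCompact.nonempty_iInter_of_sequence_nonempty_isCompact_isClosed
    · exact fun n => inter_subset_inter_left _ ((hVsub _ _).trans subset_closure)
    · exact fun n => ⟨x _, subset_closure (hx _), subset_closure (mem_range_self _)⟩
    · exact (isClosed_closure.inter isClosed_closure).isCompact
    · exact fun n => isClosed_closure.inter isClosed_closure
  choose p hp using hlim
  simp only [mem_iInter, mem_inter_iff] at hp
  have hsep : ∀ σ τ : ℕ → Bool, σ ≠ τ → ε ≤ ‖ι (p σ) - ι (p τ)‖ := by
    intro σ τ hστ
    have hex : ∃ n, σ n ≠ τ n := Function.ne_iff.1 hστ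
    classical
    have hn := Nat.find_spec hex
    have heq : branchNode σ (Nat.find hex) = branchNode τ (Nat.find hex) :=
      branchNode_congr fun m hm => not_not.1 (Nat.find_min hex hm)
    set n := Nat.find hex
    have hσ : p σ ∈ closure (V (node (branchNode σ n)) (σ n)).1 := (hp σ (n + 1)).1
    have hτ : p τ ∈ closure (V (node (branchNode τ n)) (τ n)).1 := (hp τ (n + 1)).1
    rw [← heq] at hτ
    cases h1 : σ n <;> cases h2 : τ n <;> rw [h1] at hσ <;> rw [h2] at hτ
    · exact absurd (h1.trans h2.symm) hn
    · rw [norm_sub_rev]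
      exact hVsep _ _ hτ _ hσ
    · exact hVsep _ _ hσ _ hτ
    · exact absurd (h1.trans h2.symm) hn
  let Y : Submodule ℝ X := (Submodule.span ℝ (ι '' range x)).topologicalClosure
  have hYsep : TopologicalSpace.IsSeparable (Y : Set X) :=
    ((countable_range x).image ι).isSeparable.span.closure
  have hxY : range x ⊆ ι ⁻¹' Y := fun t ht =>
    Submodule.le_topologicalClosure _ (Submodule.subset_span (mem_image_of_mem ι ht))
  have hpY : ∀ σ, ι (p σ) ∈ Y := fun σ => closure_minimal hxY
    (isClosed_preimage_of_convex hι Y.convex (Submodule.isClosed_topologicalClosure _)) (hp σ 0).2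
  obtain ⟨c, hc, hYc⟩ := hYsep
  have happrox : ∀ σ, ∃ d : c, dist (ι (p σ)) d < ε / 2 := fun σ => by
    obtain ⟨d, hd, hdist⟩ := Metric.mem_closure_iff.1 (hYc (hpY σ)) (ε / 2) (half_pos hε)
    exact ⟨⟨d, hd⟩, hdist⟩
  choose d hd using happrox
  have hinj : Function.Injective d := by
    intro σ τ hdd
    by_contra hne
    have h1 := hd σ
    have h2 := hd τ
    rw [← hdd] at h2
    have h3 := dist_triangle_right (ι (p σ)) (ι (p τ)) (d σ)
    rw [dist_eq_norm (ι (p σ)) (ι (p τ))] at h3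
    linarith [hsep σ τ hne]
  have : Countable c := hc
  obtain ⟨e, he⟩ := exists_injective_nat c
  classical
  refine Function.cantor_injective (fun A : Set ℕ => e (d fun n => decide (n ∈ A))) ?_
  intro A B hAB
  ext n
  simpa using congrFun (hinj (he hAB)) n

end WeaklyContinuous

section InvariantMeasure

variable {S : Type*} [TopologicalSpace S]

theorem re_mean_nonneg {m : (S →ᵇ ℂ) →L[ℂ] ℂ} (hm : ‖m‖ = 1) (hm1 : m 1 = 1)
    {f : S →ᵇ ℂ} {h : S → ℝ} (hf : ∀ s, f s = h s) (h0 : ∀ s, 0 ≤ h s) : 0 ≤ (m f).re := by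
  have hle : ‖(‖f‖ : ℂ) • (1 : S →ᵇ ℂ) - f‖ ≤ ‖f‖ := by
    refine (norm_le (norm_nonneg f)).2 fun s => ?_
    have hs : h s ≤ ‖f‖ := by
      have := f.norm_coe_le_norm s
      rw [hf, Complex.norm_real, Real.norm_eq_abs] at this
      exact (le_abs_self _).trans this
    have : ((‖f‖ : ℂ) • (1 : S →ᵇ ℂ) - f) s = ((‖f‖ - h s : ℝ) : ℂ) := by
      simp [hf]
    rw [this, Complex.norm_real, Real.norm_eq_abs, abs_of_nonneg (sub_nonneg.2 hs)]
    linarith [h0 s]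
  have h1 := m.le_opNorm ((‖f‖ : ℂ) • (1 : S →ᵇ ℂ) - f)
  rw [hm, one_mul, map_sub, map_smul, hm1, smul_eq_mul, mul_one] at h1
  have h2 := (Complex.re_le_norm ((‖f‖ : ℂ) - m f)).trans (h1.trans hle)
  simp only [Complex.sub_re, Complex.ofReal_re] at h2
  linarith

variable {T : Type*} [TopologicalSpace T] [CompactSpace T]

/-- Pullback of a real continuous function on a compact space along a continuous map, as a
bounded complex-valued function. -/
def pullbackComplex (θ : C(S, T)) : C(T, ℝ) →ₗ[ℝ] (S →ᵇ ℂ) where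
  toFun f := BoundedContinuousFunction.ofNormedAddCommGroup (fun s => (f (θ s) : ℂ))
    (Complex.continuous_ofReal.comp (f.continuous.comp θ.continuous)) ‖f‖
    fun s => by simpa using f.norm_coe_le_norm (θ s)
  map_add' f g := by ext s; simp
  map_smul' c f := by ext s; simp

@[simp]
theorem pullbackComplex_apply (θ : C(S, T)) (f : C(T, ℝ)) (s : S) :
    pullbackComplex θ f s = (f (θ s) : ℂ) := rfl

theorem norm_pullbackComplex_le (θ : C(S, T)) (f : C(T, ℝ)) : ‖pullbackComplex θ f‖ ≤ ‖f‖ :=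
  (norm_le (norm_nonneg f)).2 fun s => by simpa using f.norm_coe_le_norm (θ s)

theorem continuous_pullbackComplex (θ : C(S, T)) : Continuous (pullbackComplex θ) :=
  AddMonoidHomClass.continuous_of_bound (pullbackComplex θ) 1 fun f => by
    simpa using norm_pullbackComplex_le θ f

/-- Existence of an invariant regular Borel probability measure for a jointly continuous action
on a compact Hausdorff space. -/
theorem exists_invariant_measure [Semigroup S] [T2Space T] [Nonempty T] [MeasurableSpace T]
    [BorelSpace T] (hLIM : HasLIM S (LUCset S)) {act : S → T → T}
    (hcont : Continuous fun q : S × T => act q.1 q.2)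
    (hact : ∀ s t x, act (s * t) x = act s (act t x)) :
    ∃ μ : Measure T, IsProbabilityMeasure μ ∧ μ.Regular ∧ ∀ s, μ.map (act s) = μ := by
  obtain ⟨m, hm, hm1, hinv⟩ := hLIM
  obtain ⟨x₀⟩ := ‹Nonempty T›
  let θ : C(S, T) := ⟨fun s => act s x₀, hcont.comp (continuous_id.prodMk continuous_const)⟩
  let α : C(S × T, T) := ⟨fun q => act q.1 q.2, hcont⟩
  have hinv' : ∀ (f : C(T, ℝ)) (s : S),
      m (pullbackComplex θ ((f.comp α).curry s)) = m (pullbackComplex θ f) := by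
    intro f s
    have htr : IsLTranslates S (pullbackComplex θ f)
        fun s => pullbackComplex θ ((f.comp α).curry s) := by
      intro s t
      simp [θ, α, hact]
    exact hinv _ ⟨_, htr, (continuous_pullbackComplex θ).comp (f.comp α).curry.continuous⟩ _ htr s
  let Λ : CompactlySupportedContinuousMap T ℝ →ₚ[ℝ] ℝ := PositiveLinearMap.mk₀
    { toFun := fun f => (m (pullbackComplex θ f.toContinuousMap)).re
      map_add' := fun f g => by
        have : (f + g).toContinuousMap = f.toContinuousMap + g.toContinuousMap := rfl
        simp [this]
      map_smul' := fun c f => by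
        have : (c • f).toContinuousMap = c • f.toContinuousMap := rfl
        simp [this] }
    fun f hf => re_mean_nonneg hm hm1 (fun s => rfl) fun s => hf (θ s)
  have hint : ∀ f : C(T, ℝ), ∫ x, f x ∂(RealRMK.rieszMeasure Λ) =
      (m (pullbackComplex θ f)).re := fun f =>
    RealRMK.integral_rieszMeasure Λ (CompactlySupportedContinuousMap.continuousMapEquiv f)
  have hreg : (RealRMK.rieszMeasure Λ).Regular := inferInstance
  have hfin : IsFiniteMeasure (RealRMK.rieszMeasure Λ) := inferInstance
  refine ⟨RealRMK.rieszMeasure Λ, ⟨?_⟩, hreg, fun s => ?_⟩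
  · have h1 := hint 1
    have h2 : pullbackComplex θ 1 = 1 := by ext; simp
    rw [h2, hm1] at h1
    simpa [Measure.real, ENNReal.toReal_eq_one_iff] using h1
  · have hs : Continuous (act s) := hcont.comp (continuous_const.prodMk continuous_id)
    have : (RealRMK.rieszMeasure Λ).InnerRegular := inferInstance
    have := Measure.InnerRegular.map_of_continuous (μ := RealRMK.rieszMeasure Λ) hs
    refine Measure.ext_of_integral_eq_on_compactlySupported fun f => ?_
    refine (integral_map hs.aemeasurable f.continuous.aestronglyMeasurable).trans ?_
    exact (hint ((f.toContinuousMap.comp α).curry s)).trans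
      ((congrArg Complex.re (hinv' f.toContinuousMap s)).trans (hint f.toContinuousMap).symm)

end InvariantMeasure

section FixedPoint

theorem norm_sub_sq_le_of_norm_le {X T : Type*} [NormedAddCommGroup X] {ι : T → X} {R : ℝ}
    (hR : ∀ t, ‖ι t‖ ≤ R) (x : X) (t : T) :
    ‖‖x - ι t‖ ^ 2‖ ≤ (‖x‖ + R) ^ 2 := by
  rw [Real.norm_eq_abs, abs_of_nonneg (sq_nonneg _)]
  gcongr
  exact (norm_sub_le _ _).trans (by gcongr; exact hR t)

variable {X : Type*} [NormedAddCommGroup X] [NormedSpace ℝ X]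
  {T : Type*} [TopologicalSpace T] {ι : T → X}

section MeanSquareDistance

variable [MeasurableSpace T] [BorelSpace T] {μ : Measure T} [IsProbabilityMeasure μ] {R : ℝ}

theorem measurable_norm_sub (hι : ∀ f : StrongDual ℝ X, Continuous fun t => f (ι t)) (x : X) :
    Measurable fun t => ‖x - ι t‖ := by
  refine measurable_of_Iic fun c => ?_
  have : (fun t => ‖x - ι t‖) ⁻¹' Iic c = ι ⁻¹' Metric.closedBall x c := by
    ext t
    simp [dist_eq_norm, norm_sub_rev]
  rw [this]
  exact (isClosed_preimage_of_convex hι (convex_closedBall x c)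
    Metric.isClosed_closedBall).measurableSet

theorem integrable_norm_sub_sq (hι : ∀ f : StrongDual ℝ X, Continuous fun t => f (ι t))
    (hR : ∀ t, ‖ι t‖ ≤ R) (x : X) : Integrable (fun t => ‖x - ι t‖ ^ 2) μ :=
  .of_bound ((measurable_norm_sub hι x).pow_const 2).aestronglyMeasurable ((‖x‖ + R) ^ 2)
    (.of_forall (norm_sub_sq_le_of_norm_le hR x))

theorem continuous_integral_norm_sub_sq
    (hι : ∀ f : StrongDual ℝ X, Continuous fun t => f (ι t)) (hR : ∀ t, ‖ι t‖ ≤ R) :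
    Continuous fun x => ∫ t, ‖x - ι t‖ ^ 2 ∂μ := by
  refine continuous_iff_continuousAt.2 fun x₀ => ?_
  refine continuousAt_of_dominated (bound := fun _ => (‖x₀‖ + 1 + R) ^ 2)
    (.of_forall fun x => (integrable_norm_sub_sq hι hR x).aestronglyMeasurable) ?_
    (integrable_const _) (.of_forall fun t => by fun_prop)
  filter_upwards [Metric.ball_mem_nhds x₀ one_pos] with x hx
  refine .of_forall fun t => (norm_sub_sq_le_of_norm_le hR x t).trans ?_
  have hR0 : 0 ≤ R := (norm_nonneg _).trans (hR t)
  have : ‖x‖ ≤ ‖x₀‖ + 1 := by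
    have := norm_le_norm_add_norm_sub' x x₀
    rw [mem_ball_iff_norm] at hx
    linarith
  gcongr

theorem convexOn_integral_norm_sub_sq
    (hι : ∀ f : StrongDual ℝ X, Continuous fun t => f (ι t)) (hR : ∀ t, ‖ι t‖ ≤ R) :
    ConvexOn ℝ univ fun x => ∫ t, ‖x - ι t‖ ^ 2 ∂μ := by
  refine ⟨convex_univ, fun x _ y _ a b ha hb hab => ?_⟩
  have hx := integrable_norm_sub_sq (μ := μ) hι hR x
  have hy := integrable_norm_sub_sq (μ := μ) hι hR y
  simp only [smul_eq_mul]
  rw [← integral_const_mul, ← integral_const_mul,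
    ← integral_add (hx.const_mul a) (hy.const_mul b)]
  refine integral_mono (integrable_norm_sub_sq hι hR _)
    ((hx.const_mul a).add (hy.const_mul b)) fun t => ?_
  have hcv : ConvexOn ℝ univ fun z : X => ‖z - ι t‖ ^ 2 := by
    have h := (convexOn_norm (convex_univ : Convex ℝ (univ : Set X))).translate_left (-ι t)
    simp only [preimage_univ] at h
    simp only [Function.comp_def, ← sub_eq_add_neg] at h
    exact h.pow (fun _ _ => norm_nonneg _) 2
  exact hcv.2 (mem_univ x) (mem_univ y) ha hb hab

/-- If two points and their midpoint have the same mean square distance to `μ`, then they are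
equidistant from almost every point. -/
theorem ae_norm_sub_eq_of_integral_eq
    (hι : ∀ f : StrongDual ℝ X, Continuous fun t => f (ι t)) (hR : ∀ t, ‖ι t‖ ≤ R) {x y : X}
    (hxy : ∫ t, ‖x - ι t‖ ^ 2 ∂μ = ∫ t, ‖midpoint ℝ x y - ι t‖ ^ 2 ∂μ)
    (hyx : ∫ t, ‖y - ι t‖ ^ 2 ∂μ = ∫ t, ‖midpoint ℝ x y - ι t‖ ^ 2 ∂μ) :
    ∀ᵐ t ∂μ, ‖x - ι t‖ = ‖y - ι t‖ := by
  set g : T → ℝ := fun t => ‖x - ι t‖ ^ 2 + ‖y - ι t‖ ^ 2 - 2 * ‖midpoint ℝ x y - ι t‖ ^ 2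
    with hg
  have hlow : ∀ t, (‖x - ι t‖ - ‖y - ι t‖) ^ 2 / 2 ≤ g t := by
    intro t
    have h : 2 * ‖midpoint ℝ x y - ι t‖ ≤ ‖x - ι t‖ + ‖y - ι t‖ := by
      have h2 : midpoint ℝ x y - ι t = (2⁻¹ : ℝ) • ((x - ι t) + (y - ι t)) := by
        rw [midpoint_eq_smul_add, invOf_eq_inv]
        module
      rw [h2, norm_smul, Real.norm_of_nonneg (by norm_num)]
      linarith [norm_add_le (x - ι t) (y - ι t)]
    have h0 := norm_nonneg (midpoint ℝ x y - ι t)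
    simp only [hg]
    nlinarith
  have hx := integrable_norm_sub_sq (μ := μ) hι hR x
  have hy := integrable_norm_sub_sq (μ := μ) hι hR y
  have hm := (integrable_norm_sub_sq (μ := μ) hι hR (midpoint ℝ x y)).const_mul 2
  have hgint : Integrable g μ := (hx.add hy).sub hm
  have hg0 : ∫ t, g t ∂μ = 0 := by
    have h1 : ∫ t, g t ∂μ = ∫ t, (‖x - ι t‖ ^ 2 + ‖y - ι t‖ ^ 2) ∂μ -
      ∫ t, 2 * ‖midpoint ℝ x y - ι t‖ ^ 2 ∂μ := integral_sub (hx.add hy) hm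
    rw [h1, integral_add hx hy, integral_const_mul, hxy, hyx]
    ring
  have hpos : 0 ≤ g := fun t => le_trans (by positivity) (hlow t)
  filter_upwards [(integral_eq_zero_iff_of_nonneg hpos hgint).1 hg0] with t ht
  have := hlow t
  rw [ht, Pi.zero_apply] at this
  exact sub_eq_zero.1 (pow_eq_zero_iff two_ne_zero |>.1
    (le_antisymm (by linarith) (sq_nonneg _)))

end MeanSquareDistance

variable [CompactSpace T] [T2Space T]

/-- A regular measure on a weakly compact set charges sets of arbitrarily small norm diameter. -/
theorem exists_measure_ne_zero_norm_sub_le [MeasurableSpace T] [BorelSpace T] {μ : Measure T}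
    [μ.Regular] (hμ : μ ≠ 0) (hι : ∀ f : StrongDual ℝ X, Continuous fun t => f (ι t)) {ε : ℝ}
    (hε : 0 < ε) : ∃ U : Set T, μ U ≠ 0 ∧ ∀ x ∈ U, ∀ y ∈ U, ‖ι x - ι y‖ ≤ ε := by
  have hsupp : μ μ.supportᶜ = 0 := Measure.measure_compl_support_of_regular
  have hne : Nonempty μ.support := by
    by_contra h
    rw [not_nonempty_iff, isEmpty_coe_sort] at h
    rw [h, compl_empty, Measure.measure_univ_eq_zero] at hsupp
    exact hμ hsupp
  have : CompactSpace μ.support := isCompact_iff_compactSpace.1 Measure.isClosed_support.isCompact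
  obtain ⟨U, hU, ⟨x, hx⟩, hsmall⟩ := exists_isOpen_norm_sub_le (T := μ.support)
    (ι := fun t => ι t) (fun f => (hι f).comp continuous_subtype_val) hε
  obtain ⟨V, hV, rfl⟩ := isOpen_induced_iff.1 hU
  refine ⟨V ∩ μ.support, ?_, fun a ha b hb => hsmall ⟨a, ha.2⟩ ha.1 ⟨b, hb.2⟩ hb.1⟩
  rw [measure_inter_conull' (measure_mono_null (fun _ h => h.2) hsupp)]
  exact ((Measure.mem_support_iff_forall _).1 x.2 V (hV.mem_nhds hx)).ne'

variable {S : Type*} [Semigroup S] [TopologicalSpace S] {act : S → T → T} {R : ℝ}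

/-- A nonexpansive action on a weakly compact convex set without proper invariant weakly compact
convex subsets lives on a single point. -/
theorem subsingleton_of_minimal (hinj : Function.Injective ι)
    (hι : ∀ f : StrongDual ℝ X, Continuous fun t => f (ι t))
    (hR : ∀ t, ‖ι t‖ ≤ R) (hconv : Convex ℝ (range ι)) (hLIM : HasLIM S (LUCset S))
    (hcont : Continuous fun q : S × T => act q.1 q.2)
    (hact : ∀ s t x, act (s * t) x = act s (act t x))
    (hne : ∀ s x y, ‖ι (act s x) - ι (act s y)‖ ≤ ‖ι x - ι y‖)
    (hmin : ∀ Z : Set T, IsClosed Z → Z.Nonempty → Convex ℝ (ι '' Z) →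
      (∀ s, MapsTo (act s) Z Z) → Z = univ) : Subsingleton T := by
  rcases isEmpty_or_nonempty T with hT | hT
  · infer_instance
  borelize T
  obtain ⟨μ, hμ, hreg, hinv⟩ := exists_invariant_measure hLIM hcont hact
  have hconst : ∀ t t', ∫ y, ‖ι t - ι y‖ ^ 2 ∂μ ≤ ∫ y, ‖ι t' - ι y‖ ^ 2 ∂μ := by
    intro t t'
    set B : Set X := {x | ∫ y, ‖x - ι y‖ ^ 2 ∂μ ≤ ∫ y, ‖ι t' - ι y‖ ^ 2 ∂μ} with hB
    have hBc : IsClosed B := isClosed_le (continuous_integral_norm_sub_sq hι hR) continuous_const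
    have hBconv : Convex ℝ B := by
      simpa [hB] using (convexOn_integral_norm_sub_sq (μ := μ) hι hR).convex_le
        (∫ y, ‖ι t' - ι y‖ ^ 2 ∂μ)
    have hZ : ι ⁻¹' B = univ := by
      refine hmin _ (isClosed_preimage_of_convex hι hBconv hBc)
        ⟨t', le_refl (∫ y, ‖ι t' - ι y‖ ^ 2 ∂μ)⟩ ?_ ?_
      · rw [image_preimage_eq_inter_range]
        exact hBconv.inter hconv
      · intro s x hx
        have hs : Continuous (act s) := hcont.comp (continuous_const.prodMk continuous_id)
        have hx' : ∫ y, ‖ι x - ι y‖ ^ 2 ∂μ ≤ ∫ y, ‖ι t' - ι y‖ ^ 2 ∂μ := hx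
        refine le_trans ?_ hx'
        have heq : ∫ y, ‖ι (act s x) - ι y‖ ^ 2 ∂μ =
            ∫ y, ‖ι (act s x) - ι (act s y)‖ ^ 2 ∂μ := by
          conv_lhs => rw [← hinv s]
          exact integral_map hs.aemeasurable
            ((measurable_norm_sub hι _).pow_const 2).aestronglyMeasurable
        rw [heq]
        refine integral_mono ?_ (integrable_norm_sub_sq hι hR _) fun y => ?_
        · exact integrable_norm_sub_sq (fun f => (hι f).comp hs) (fun y => hR (act s y)) _
        · exact pow_le_pow_left₀ (norm_nonneg _) (hne s x y) 2
    exact (hZ ▸ mem_univ t : t ∈ ι ⁻¹' B)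
  have hae : ∀ t t', ∀ᵐ y ∂μ, ‖ι t - ι y‖ = ‖ι t' - ι y‖ := by
    intro t t'
    obtain ⟨u, hu⟩ := hconv.midpoint_mem (mem_range_self t) (mem_range_self t')
    refine ae_norm_sub_eq_of_integral_eq hι hR ?_ ?_ <;> rw [← hu] <;>
      exact le_antisymm (hconst _ _) (hconst _ _)
  refine ⟨fun a b => hinj (eq_of_sub_eq_zero (norm_le_zero_iff.1 (le_of_forall_pos_le_add ?_)))⟩
  intro ε hε
  obtain ⟨U, hU, hsmall⟩ := exists_measure_ne_zero_norm_sub_le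
    (IsProbabilityMeasure.ne_zero μ) hι (ε := ε / 4) (by positivity)
  obtain ⟨x, hx⟩ := nonempty_of_measure_ne_zero hU
  have hclose : ∀ z, ‖ι z - ι x‖ ≤ ε / 2 := by
    intro z
    have hfreq : ∃ᵐ y ∂μ, y ∈ U := by
      rwa [frequently_ae_mem_iff]
    obtain ⟨y, hyU, hy⟩ := (hfreq.and_eventually (hae z x)).exists
    have h1 := hsmall x hx y hyU
    have h2 := norm_sub_le_norm_sub_add_norm_sub (ι z) (ι y) (ι x)
    rw [hy, norm_sub_rev (ι y)] at h2
    linarith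
  have h2 := norm_sub_le_norm_sub_add_norm_sub (ι a) (ι x) (ι b)
  rw [norm_sub_rev (ι x)] at h2
  linarith [hclose a, hclose b]

/-- Fixed points of nonexpansive, jointly continuous actions on weakly compact convex sets. -/
theorem exists_fixedPoint_of_LUC_hasLIM [Nonempty T] (hinj : Function.Injective ι)
    (hι : ∀ f : StrongDual ℝ X, Continuous fun t => f (ι t))
    (hR : ∀ t, ‖ι t‖ ≤ R) (hconv : Convex ℝ (range ι)) (hLIM : HasLIM S (LUCset S))
    (hcont : Continuous fun q : S × T => act q.1 q.2)
    (hact : ∀ s t x, act (s * t) x = act s (act t x))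
    (hne : ∀ s x y, ‖ι (act s x) - ι (act s y)‖ ≤ ‖ι x - ι y‖) :
    ∃ x, ∀ s, act s x = x := by
  let P : Set (Set T) :=
    {Z | IsClosed Z ∧ Z.Nonempty ∧ Convex ℝ (ι '' Z) ∧ ∀ s, MapsTo (act s) Z Z}
  have hchains : ∀ c ⊆ P, IsChain (· ⊆ ·) c → c.Nonempty → ∃ lb ∈ P, ∀ Z ∈ c, lb ⊆ Z := by
    intro c hc hchain hcne
    have : Nonempty c := hcne.to_subtype
    refine ⟨⋂₀ c, ⟨isClosed_sInter fun Z hZ => (hc hZ).1, ?_, ?_, ?_⟩,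
      fun Z hZ => sInter_subset_of_mem hZ⟩
    · exact IsCompact.nonempty_sInter_of_directed_nonempty_isCompact_isClosed
        (fun Z hZ W hW => (hchain.total hZ hW).elim
          (fun h => ⟨Z, hZ, subset_rfl, h⟩) fun h => ⟨W, hW, h, subset_rfl⟩)
        (fun Z hZ => (hc hZ).2.1)
        (fun Z hZ => (hc hZ).1.isCompact) (fun Z hZ => (hc hZ).1)
    · rw [sInter_eq_iInter, hinj.injOn.image_iInter_eq]
      exact convex_iInter fun Z => (hc Z.2).2.2.1
    · exact fun s x hx Z hZ => (hc hZ).2.2.2 s (hx Z hZ)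
  obtain ⟨Z, -, hZ⟩ := zorn_superset_nonempty P hchains univ
    ⟨isClosed_univ, univ_nonempty, by rwa [image_univ], fun s => mapsTo_univ _ _⟩
  obtain ⟨hZc, hZne, hZconv, hZinv⟩ := hZ.prop
  have : CompactSpace Z := isCompact_iff_compactSpace.1 hZc.isCompact
  have hsub : Subsingleton Z := by
    refine subsingleton_of_minimal (ι := fun z : Z => ι z)
      (act := fun s z => ⟨act s z, hZinv s z.2⟩) (hinj.comp Subtype.val_injective)
      (fun f => (hι f).comp continuous_subtype_val) (fun t => hR t) ?_ hLIM ?_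
      (fun s t x => Subtype.ext (hact s t x)) (fun s x y => hne s x y) ?_
    · rwa [← image_eq_range]
    · exact (hcont.comp (continuous_fst.prodMk
        (continuous_subtype_val.comp continuous_snd))).subtype_mk _
    · intro W hW hWne hWconv hWinv
      have hsub : Subtype.val '' W ⊆ Z := Subtype.coe_image_subset Z W
      have hmem := hZ.2 (y := Subtype.val '' W)
        ⟨hZc.isClosedEmbedding_subtypeVal.isClosedMap _ hW, hWne.image _,
          by rwa [image_image], ?_⟩ hsub
      · refine eq_univ_of_forall fun z => ?_
        obtain ⟨w, hw, hwz⟩ := hmem z.2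
        rwa [← Subtype.ext hwz]
      · rintro s _ ⟨w, hw, rfl⟩
        exact ⟨_, hWinv s hw, rfl⟩
  obtain ⟨x, hx⟩ := hZne
  exact ⟨x, fun s => congrArg Subtype.val (hsub.elim ⟨act s x, hZinv s hx⟩ ⟨x, hx⟩)⟩

end FixedPoint

section ChebyshevCenter

variable {X : Type v} [NormedAddCommGroup X] {C A : Set X}

theorem bddAbove_range_norm_sub (hA : Bornology.IsBounded A) (x : X) :
    BddAbove (range fun y : A => ‖x - y‖) := by
  obtain ⟨R, hR⟩ := isBounded_iff_forall_norm_le.1 hA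
  refine ⟨‖x‖ + R, ?_⟩
  rintro _ ⟨y, rfl⟩
  exact (norm_sub_le _ _).trans (by gcongr; exact hR y y.2)

theorem bddBelow_range_iSup_norm_sub :
    BddBelow (range fun x : C => ⨆ y : A, ‖(x : X) - y‖) := by
  refine ⟨0, ?_⟩
  rintro _ ⟨x, rfl⟩
  exact Real.iSup_nonneg fun _ => norm_nonneg _

theorem chebyshevRadius_le_of_forall (hAne : A.Nonempty) {x : X} (hx : x ∈ C) {r : ℝ}
    (h : ∀ y ∈ A, ‖x - y‖ ≤ r) : chebyshevRadius C A ≤ r := by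
  have : Nonempty A := hAne.to_subtype
  exact (ciInf_le bddBelow_range_iSup_norm_sub ⟨x, hx⟩).trans (ciSup_le fun y => h y y.2)

theorem mem_chebyshevCenter_iff (hAne : A.Nonempty) (hA : Bornology.IsBounded A) {x : X} :
    x ∈ chebyshevCenter C A ↔ x ∈ C ∧ ∀ y ∈ A, ‖x - y‖ ≤ chebyshevRadius C A := by
  have : Nonempty A := hAne.to_subtype
  refine and_congr_right fun hx => ⟨fun h y hy => ?_, fun h => ?_⟩
  · rw [← h]
    exact le_ciSup (bddAbove_range_norm_sub hA x) ⟨y, hy⟩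
  · exact le_antisymm (ciSup_le fun y => h y y.2) (ciInf_le bddBelow_range_iSup_norm_sub ⟨x, hx⟩)

theorem exists_forall_norm_sub_le_of_radius_lt (hC : C.Nonempty) (hA : Bornology.IsBounded A)
    {r : ℝ} (hr : chebyshevRadius C A < r) : ∃ x ∈ C, ∀ y ∈ A, ‖x - y‖ ≤ r := by
  have : Nonempty C := hC.to_subtype
  obtain ⟨x, hx⟩ := exists_lt_of_ciInf_lt hr
  exact ⟨x, x.2, fun y hy => (le_ciSup (bddAbove_range_norm_sub hA x) ⟨y, hy⟩).trans hx.le⟩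

variable [NormedSpace ℝ X]

theorem convex_chebyshevCenter (hC : Convex ℝ C) (hAne : A.Nonempty)
    (hA : Bornology.IsBounded A) : Convex ℝ (chebyshevCenter C A) := by
  have : chebyshevCenter C A = C ∩ ⋂ y ∈ A, Metric.closedBall y (chebyshevRadius C A) := by
    ext x
    simp [mem_chebyshevCenter_iff hAne hA, dist_eq_norm]
  rw [this]
  exact hC.inter (convex_iInter₂ fun y _ => convex_closedBall y _)

/-- The Chebyshev center of a bounded subset of an `L`-embedded set is nonempty and weakly
compact: it is parametrized by a compact space carrying the weak topology. -/
theorem LEmbeddedSet.exists_compact_parametrization (hL : LEmbeddedSet C) (hC : C.Nonempty)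
    (hAne : A.Nonempty) (hA : Bornology.IsBounded A) :
    ∃ (T : Type v) (_ : TopologicalSpace T) (ι : T → X), CompactSpace T ∧ T2Space T ∧ Nonempty T ∧
      Function.Injective ι ∧ range ι = chebyshevCenter C A ∧
      Topology.IsInducing fun t (f : StrongDual ℝ X) => f (ι t) := by
  obtain ⟨Xs, -, hnorm, hcl⟩ := hL
  set J := NormedSpace.inclusionInDoubleDual ℝ X
  have hJnorm : ∀ x, ‖J x‖ = ‖x‖ := fun x => (NormedSpace.inclusionInDoubleDualLi ℝ).norm_map x
  let V : ℝ → Set (WeakDual ℝ (StrongDual ℝ X)) := fun r =>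
    closure (StrongDual.toWeakDual '' (J '' C)) ∩
      ⋂ y ∈ A, WeakDual.toStrongDual ⁻¹' Metric.closedBall (J y) r
  have hVclosed : ∀ r, IsClosed (V r) := fun r => isClosed_closure.inter
    (isClosed_biInter fun y _ => WeakDual.isClosed_closedBall (J y) r)
  obtain ⟨y₀, hy₀⟩ := hAne
  have hVcompact : ∀ r, IsCompact (V r) := fun r =>
    (WeakDual.isCompact_closedBall (J y₀) r).of_isClosed_subset (hVclosed r)
      fun z hz => mem_iInter₂.1 hz.2 y₀ hy₀
  have hmemV : ∀ r, ∀ x ∈ C, (∀ y ∈ A, ‖x - y‖ ≤ r) → StrongDual.toWeakDual (J x) ∈ V r := by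
    intro r x hx h
    refine ⟨subset_closure ⟨J x, ⟨x, hx, rfl⟩, rfl⟩, mem_iInter₂.2 fun y hy => ?_⟩
    have : ‖J x - J y‖ ≤ r := by rw [← map_sub, hJnorm]; exact h y hy
    exact (mem_closedBall_iff_norm (E := StrongDual ℝ (StrongDual ℝ X))).2 this
  set r := chebyshevRadius C A
  have hVne : (V r).Nonempty := by
    have hne : (⋂ n : ℕ, V (r + 1 / (n + 1))).Nonempty := by
      refine IsCompact.nonempty_iInter_of_sequence_nonempty_isCompact_isClosed _ ?_ ?_
        (hVcompact _) fun n => hVclosed _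
      · intro n
        refine inter_subset_inter_right _ (iInter₂_mono fun y _ => ?_)
        refine preimage_mono (Metric.closedBall_subset_closedBall ?_)
        have := Nat.one_div_le_one_div (α := ℝ) n.le_succ
        push_cast at this ⊢
        linarith
      · intro n
        obtain ⟨x, hx, h⟩ := exists_forall_norm_sub_le_of_radius_lt hC hA
          (lt_add_of_pos_right (chebyshevRadius C A) (Nat.one_div_pos_of_nat (α := ℝ) (n := n)))
        exact ⟨_, hmemV _ x hx h⟩
    obtain ⟨z, hz⟩ := hne
    rw [mem_iInter] at hz
    refine ⟨z, (hz 0).1, mem_iInter₂.2 fun y hy => ?_⟩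
    refine ge_of_tendsto' (x := Filter.atTop) (f := fun n : ℕ => r + 1 / ((n : ℝ) + 1)) ?_
      fun n => mem_iInter₂.1 (hz n).2 y hy
    simpa using (tendsto_one_div_add_atTop_nhds_zero_nat (𝕜 := ℝ)).const_add r
  have hlift : ∀ z : V r, ∃ c ∈ chebyshevCenter C A, StrongDual.toWeakDual (J c) = z := by
    rintro ⟨z, hz, hzA⟩
    have hz' : WeakDual.toStrongDual z ∈
        @closure _ (wstarTop (StrongDual ℝ X)) (J '' C) := by
      have himg : StrongDual.toWeakDual '' (J '' C) = J '' C := image_id _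
      rw [himg] at hz
      exact hz
    obtain ⟨c, hc, ξ, hξ, hzc⟩ := hcl hz'
    have hdist : ∀ y ∈ A, ‖c - y‖ + ‖ξ‖ ≤ r := by
      intro y hy
      have h1 : ‖WeakDual.toStrongDual z - J y‖ ≤ r :=
        (mem_closedBall_iff_norm (E := StrongDual ℝ (StrongDual ℝ X))).1 (mem_iInter₂.1 hzA y hy)
      have h2 : WeakDual.toStrongDual z - J y = J (c - y) + ξ := by
        rw [hzc, map_sub]
        abel
      rwa [h2, hnorm _ ξ hξ, hJnorm] at h1
    have hle : r ≤ r - ‖ξ‖ := chebyshevRadius_le_of_forall ⟨y₀, hy₀⟩ hc fun y hy => by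
      linarith [hdist y hy]
    have hξn : ‖ξ‖ ≤ 0 := by linarith
    have hξ0 : ξ = 0 := (norm_le_zero_iff (E := StrongDual ℝ (StrongDual ℝ X))).1 hξn
    refine ⟨c, (mem_chebyshevCenter_iff ⟨y₀, hy₀⟩ hA).2 ⟨hc, fun y hy => ?_⟩, ?_⟩
    · linarith [hdist y hy, norm_nonneg ξ]
    · rw [hξ0, add_zero] at hzc
      rw [← hzc]
      rfl
  choose ι hιmem hι using hlift
  have hfun : (fun (t : V r) (f : StrongDual ℝ X) => f (ι t)) =
      (fun (z : WeakDual ℝ (StrongDual ℝ X)) (f : StrongDual ℝ X) => z f) ∘ Subtype.val := by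
    funext t f
    rw [Function.comp_apply, ← hι t]
    rfl
  refine ⟨V r, inferInstance, ι, isCompact_iff_compactSpace.1 (hVcompact r), inferInstance,
    hVne.to_subtype, fun a b hab => ?_, ?_, ?_⟩
  · rw [Subtype.ext_iff, ← hι a, ← hι b, hab]
  · refine subset_antisymm (range_subset_iff.2 hιmem) fun c hc => ?_
    obtain ⟨hcC, hcA⟩ := (mem_chebyshevCenter_iff ⟨y₀, hy₀⟩ hA).1 hc
    refine ⟨⟨_, hmemV r c hcC hcA⟩, ?_⟩
    have := hι ⟨_, hmemV r c hcC hcA⟩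
    exact (NormedSpace.inclusionInDoubleDualLi ℝ).injective (StrongDual.toWeakDual.injective this)
  · rw [hfun]
    exact Topology.IsInducing.comp ⟨rfl⟩ Topology.IsInducing.subtypeVal

end ChebyshevCenter

theorem ContinuousOn.continuous_comp_prodMap {S T X Y : Type*} [TopologicalSpace S]
    [TopologicalSpace T] [TopologicalSpace X] [TopologicalSpace Y] {F : S × X → X} {C : Set X}
    (hF : ContinuousOn F (univ ×ˢ C)) {ι : T → X} (hι : Continuous ι) (hC : ∀ t, ι t ∈ C)
    {f : X → Y} (hf : Continuous f) : Continuous fun q : S × T => f (F (q.1, ι q.2)) :=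
  hf.comp (hF.comp_continuous (continuous_fst.prodMk (hι.comp continuous_snd))
    fun q => ⟨mem_univ _, hC q.2⟩)

/-- **Theorem (L-em)**: Let `C` be a bounded convex `L`-embedded subset of a Banach space `X`
and `(S,(C,weak))` a nonexpansive, jointly weakly continuous dynamical system.  If `LUC(S)` has
a left invariant mean and `C` contains a nonempty bounded subset `A` with `s(A) = A` for all
`s ∈ S`, then `S` has a fixed point in the Chebyshev center `E_C(A)`. -/
theorem fixedPoint_in_chebyshevCenter_of_LUC_hasLIM
    {S : Type u} [Semigroup S] [TopologicalSpace S] [T2Space S]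
    (hS : IsSemitopologicalSemigroup S)
    {X : Type v} [NormedAddCommGroup X] [NormedSpace ℝ X] [CompleteSpace X]
    (C : Set X)
    -- `C` is a nonempty bounded convex `L`-embedded set
    (hCne : C.Nonempty) (hCbdd : Bornology.IsBounded C) (hCcv : Convex ℝ C)
    (hLemb : LEmbeddedSet C)
    (π : S → X → X)
    -- `(S,(C,weak))` is a dynamical system
    (hinv : ∀ s : S, MapsTo (π s) C C)
    (hact : ∀ s t : S, ∀ x ∈ C, π (s * t) x = π s (π t x))
    -- the action is jointly continuous when `C` carries the weak topology
    (hjoint : @ContinuousOn (S × X) X (@instTopologicalSpaceProd S X _ (weakTop ℝ X))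
      (weakTop ℝ X) (fun q => π q.1 q.2) (Set.univ ×ˢ C))
    -- the system is nonexpansive
    (hne : ∀ s : S, ∀ x ∈ C, ∀ y ∈ C, ‖π s x - π s y‖ ≤ ‖x - y‖)
    -- `LUC(S)` has a left invariant mean
    (hLIM : HasLIM S (LUCset S))
    -- `A ⊆ C` is a nonempty bounded set with `s(A) = A` for all `s`
    (A : Set X) (hAC : A ⊆ C) (hAne : A.Nonempty) (hAbdd : Bornology.IsBounded A)
    (hAinv : ∀ s : S, π s '' A = A) :
    ∃ x ∈ chebyshevCenter C A, ∀ s : S, π s x = x := by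
  obtain ⟨T, _, ι, _, _, _, hinj, hrange, hind⟩ :=
    hLemb.exists_compact_parametrization hCne hAne hAbdd
  have hmem : ∀ t, ι t ∈ chebyshevCenter C A := fun t => hrange ▸ mem_range_self t
  have hιC : ∀ t, ι t ∈ C := fun t => (hmem t).1
  have hι : ∀ f : StrongDual ℝ X, Continuous fun t => f (ι t) := fun f =>
    (continuous_apply f).comp hind.continuous
  have hinvE : ∀ s t, π s (ι t) ∈ range ι := by
    intro s t
    rw [hrange, mem_chebyshevCenter_iff hAne hAbdd]
    refine ⟨hinv s (hιC t), fun y hy => ?_⟩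
    obtain ⟨y', hy', rfl⟩ := (hAinv s).symm ▸ hy
    exact (hne s _ (hιC t) _ (hAC hy')).trans
      (((mem_chebyshevCenter_iff hAne hAbdd).1 (hmem t)).2 y' hy')
  choose act hπ using hinvE
  have hweak : @Continuous T X _ (weakTop ℝ X) ι :=
    continuous_iInf_rng.2 fun f => continuous_induced_rng.2 (hι f)
  have hcont : Continuous fun q : S × T => act q.1 q.2 := by
    refine hind.continuous_iff.2 (continuous_pi fun f => ?_)
    simp only [Function.comp_apply, hπ]
    exact @ContinuousOn.continuous_comp_prodMap S T X ℝ _ _ (weakTop ℝ X) _ _ C hjoint ι hweak hιC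
      f (continuous_iInf_dom continuous_induced_dom)
  obtain ⟨R, hR⟩ := isBounded_iff_forall_norm_le.1 hCbdd
  obtain ⟨x, hx⟩ := exists_fixedPoint_of_LUC_hasLIM (act := act) hinj hι (fun t => hR _ (hιC t))
    (hrange ▸ convex_chebyshevCenter hCcv hAne hAbdd) hLIM hcont
    (fun s t x => hinj (by rw [hπ, hπ, hπ, hact s t _ (hιC x)]))
    (fun s x y => by rw [hπ, hπ]; exact hne s _ (hιC x) _ (hιC y))
  exact ⟨ι x, hmem x, fun s => by rw [← hπ, hx]⟩
end
end

section
/- Let S be a semitopological semigroup and let (S,(K,weak*)) be a nonexpansive dynamical system, where K is a weak* compact convex subset of the dual space X* of an M-embedded Banach space X. Suppose AP(S) has a left invariant mean and the translations λ_s: K → K, λ_s(x) = sx, are equicontinuous in the weak* topology. Then there is x ∈ K with sx = x for all s ∈ S, and the fixed point set F(S) = {x ∈ K : sx = x for all s ∈ S} is a nonexpansive retract of K, i.e., there is a map r: K → K with r(K) ⊆ F(S), r ∘ r = r, r fixing F(S) pointwise, and ‖r(x) − r(y)‖ ≤ ‖x − y‖ for all x, y ∈ K. -/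
open Set MeasureTheory BoundedContinuousFunction

noncomputable section

universe u v

set_option maxSynthPendingDepth 3 in
/-- A Banach space `X` is `M`-embedded if `X` is an `M`-ideal in its bidual, i.e.
`X*** = X* ⊕₁ X^⊥`. -/
def MEmbeddedSpace (X : Type v) [NormedAddCommGroup X] [NormedSpace ℝ X] : Prop :=
  -- every `F ∈ X***` decomposes as `F = g + H` with `g` in the canonical image of `X*`
  -- and `H ∈ X^⊥`
  (∀ F : StrongDual ℝ (StrongDual ℝ (StrongDual ℝ X)),
    ∃ (g : StrongDual ℝ X)
      (H : StrongDual ℝ (StrongDual ℝ (StrongDual ℝ X))),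
      (∀ x : X, H (NormedSpace.inclusionInDoubleDual ℝ X x) = 0) ∧
      F = NormedSpace.inclusionInDoubleDual ℝ (StrongDual ℝ X) g + H) ∧
  -- and the decomposition is an `ℓ¹`-decomposition
  (∀ (g : StrongDual ℝ X)
      (H : StrongDual ℝ (StrongDual ℝ (StrongDual ℝ X))),
    (∀ x : X, H (NormedSpace.inclusionInDoubleDual ℝ X x) = 0) →
    ‖NormedSpace.inclusionInDoubleDual ℝ (StrongDual ℝ X) g + H‖ =
      ‖NormedSpace.inclusionInDoubleDual ℝ (StrongDual ℝ X) g‖ + ‖H‖)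

open Filter Topology

/-- The norm of a weak* continuous family of functionals is lower semicontinuous. -/
theorem isClosed_norm_sub_le {T X : Type*} [TopologicalSpace T] [NormedAddCommGroup X]
    [NormedSpace ℝ X] {φ ψ : T → StrongDual ℝ X} (hφ : ∀ x, Continuous fun t => φ t x)
    (hψ : ∀ x, Continuous fun t => ψ t x) (c : ℝ) : IsClosed {t | ‖φ t - ψ t‖ ≤ c} := by
  rcases lt_or_ge c 0 with hc | hc
  · convert isClosed_empty
    ext t
    simpa using hc.trans_le (norm_nonneg _)
  · have : {t | ‖φ t - ψ t‖ ≤ c} = ⋂ x, {t | |φ t x - ψ t x| ≤ c * ‖x‖} := by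
      ext t
      simp only [mem_ofPred_eq, mem_iInter, ContinuousLinearMap.opNorm_le_iff hc]
      rfl
    rw [this]
    exact isClosed_iInter fun x =>
      isClosed_le ((hφ x).sub (hψ x)).abs continuous_const

set_option maxSynthPendingDepth 3 in
/-- In the dual of an `M`-embedded space, a weak* limit along which the norms do not drop is a
weak limit. -/
theorem tendsto_weak_of_tendsto_wstar {X ι : Type*} [NormedAddCommGroup X] [NormedSpace ℝ X]
    (hM : MEmbeddedSpace X) (U : Ultrafilter ι) (φ : ι → StrongDual ℝ X) (m : StrongDual ℝ X)
    (hφ : ∀ x, Tendsto (fun i => φ i x) U (𝓝 (m x)))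
    (hn : ∀ c, ‖m‖ < c → ∀ᶠ i in (U : Filter ι), ‖φ i‖ ≤ c)
    (ψ : StrongDual ℝ (StrongDual ℝ X)) : Tendsto (fun i => ψ (φ i)) U (𝓝 (ψ m)) := by
  let J : ι → WeakDual ℝ (StrongDual ℝ (StrongDual ℝ X)) := fun i =>
    StrongDual.toWeakDual (NormedSpace.inclusionInDoubleDual ℝ (StrongDual ℝ X) (φ i))
  have hJ : ∀ c, ‖m‖ < c → ∀ᶠ i in (U : Filter ι),
      J i ∈ WeakDual.toStrongDual ⁻¹'
        Metric.closedBall (0 : StrongDual ℝ (StrongDual ℝ (StrongDual ℝ X))) c := by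
    intro c hc
    filter_upwards [hn c hc] with i hi
    simpa [J] using (NormedSpace.double_dual_bound ℝ (StrongDual ℝ X) (φ i)).trans hi
  obtain ⟨F, -, hF⟩ := (WeakDual.isCompact_closedBall
    (0 : StrongDual ℝ (StrongDual ℝ (StrongDual ℝ X))) (‖m‖ + 1)).ultrafilter_le_nhds'
    (U.map J) (hJ _ (lt_add_one _))
  replace hF : Tendsto J U (𝓝 F) := hF
  have hev : ∀ θ : StrongDual ℝ (StrongDual ℝ X), Tendsto (fun i => θ (φ i)) U (𝓝 (F θ)) :=
    fun θ => ((WeakDual.eval_continuous θ).tendsto F).comp hF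
  have hFn : ‖WeakDual.toStrongDual F‖ ≤ ‖m‖ := by
    refine le_of_forall_gt_imp_ge_of_dense fun c hc => ?_
    have := (WeakDual.isClosed_closedBall
      (0 : StrongDual ℝ (StrongDual ℝ (StrongDual ℝ X))) c).mem_of_tendsto hF (hJ c hc)
    simpa using this
  obtain ⟨g, H, hH, hFg⟩ := hM.1 (WeakDual.toStrongDual F)
  have hgm : g = m := by
    ext x
    have h1 : F (NormedSpace.inclusionInDoubleDual ℝ X x) = g x := by
      have := DFunLike.congr_fun hFg (NormedSpace.inclusionInDoubleDual ℝ X x)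
      simpa [hH x] using this
    have h2 := hev (NormedSpace.inclusionInDoubleDual ℝ X x)
    rw [h1] at h2
    exact tendsto_nhds_unique h2 (hφ x)
  subst hgm
  have hsum := hM.2 g H hH
  have hg : ‖NormedSpace.inclusionInDoubleDual ℝ (StrongDual ℝ X) g‖ = ‖g‖ :=
    (NormedSpace.inclusionInDoubleDualLi (E := StrongDual ℝ X) ℝ).norm_map g
  rw [← hFg, hg] at hsum
  have hH0 : H = 0 := norm_le_zero_iff.1 (by linarith)
  have hFψ : F ψ = ψ g := by
    have := DFunLike.congr_fun hFg ψ
    simpa [hH0] using this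
  rw [← hFψ]
  exact hev ψ

/-- A weak* continuous map from a separable Baire space to the dual of an `M`-embedded space maps
some nonempty open set into a small norm ball. -/
theorem exists_isOpen_subset_closedBall {X T : Type*} [NormedAddCommGroup X] [NormedSpace ℝ X]
    (hM : MEmbeddedSpace X) [TopologicalSpace T] [BaireSpace T] [Nonempty T]
    {φ : T → StrongDual ℝ X} (hφ : ∀ x, Continuous fun t => φ t x) {D : Set T}
    (hDc : D.Countable) (hD : Dense D) {ε : ℝ} (hε : 0 < ε) :
    ∃ V : Set T, IsOpen V ∧ V.Nonempty ∧ ∃ y, ∀ t ∈ V, ‖φ t - y‖ ≤ ε := by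
  let L : Submodule ℝ (StrongDual ℝ X) := (Submodule.span ℝ (φ '' D)).topologicalClosure
  have hLsep : TopologicalSpace.IsSeparable (L : Set (StrongDual ℝ X)) :=
    ((hDc.image φ).isSeparable.span).closure
  obtain ⟨c, hc, hLc⟩ := hLsep
  have := hc.to_subtype
  have hcl : ∀ q : ℝ, IsClosed {t | ‖φ t‖ ≤ q} := fun q => by
    have h := isClosed_norm_sub_le (ψ := fun _ => 0) hφ (fun _ => continuous_const) q
    simp only [sub_zero] at h
    exact h
  let A : ℚ ⊕ c → Set T :=
    Sum.elim (fun q => frontier {t | ‖φ t‖ ≤ (q : ℝ)}) (fun y => {t | ‖φ t - y.1‖ ≤ ε})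
  have hAc : ∀ i, IsClosed (A i) := by
    rintro (q | y)
    · exact isClosed_frontier
    · exact isClosed_norm_sub_le (ψ := fun _ => y.1) hφ (fun x => continuous_const) ε
  have hAU : ⋃ i, A i = univ := by
    refine eq_univ_of_forall fun t => ?_
    by_contra ht
    simp only [mem_iUnion, not_exists] at ht
    have hup : ∀ r, ‖φ t‖ < r → ∀ᶠ t' in 𝓝 t, ‖φ t'‖ ≤ r := by
      intro r hr
      obtain ⟨q, hq1, hq2⟩ := exists_rat_btwn hr
      have h1 : t ∉ frontier {t | ‖φ t‖ ≤ (q : ℝ)} := ht (Sum.inl q)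
      rw [(hcl q).frontier_eq] at h1
      have h2 : t ∈ interior {t | ‖φ t‖ ≤ (q : ℝ)} := by
        by_contra h
        exact h1 ⟨hq1.le, h⟩
      filter_upwards [mem_interior_iff_mem_nhds.1 h2] with t' ht'
      exact le_trans ht' hq2.le
    have hmem : φ t ∈ L := by
      by_contra hnot
      obtain ⟨f, u, hfL, hfu⟩ := geometric_hahn_banach_closed_point L.convex
        (Submodule.isClosed_topologicalClosure _) hnot
      have hne : NeBot (𝓝[D] t) := mem_closure_iff_nhdsWithin_neBot.1 (hD t)
      have hU : (Ultrafilter.of (𝓝[D] t) : Filter T) ≤ 𝓝[D] t := Ultrafilter.of_le _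
      have hlim := tendsto_weak_of_tendsto_wstar hM (Ultrafilter.of (𝓝[D] t)) φ (φ t)
        (fun x => ((hφ x).tendsto t).mono_left (hU.trans nhdsWithin_le_nhds))
        (fun r hr => (hU.trans nhdsWithin_le_nhds) (hup r hr)) f
      refine hfu.not_ge (le_of_tendsto hlim (hU ?_))
      filter_upwards [self_mem_nhdsWithin] with d hd
      exact (hfL _ (Submodule.le_topologicalClosure _
        (Submodule.subset_span (mem_image_of_mem φ hd)))).le
    have := Metric.mem_closure_iff.1 (hLc hmem) ε hε
    obtain ⟨y, hy, hty⟩ := this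
    exact ht (Sum.inr ⟨y, hy⟩) (by simpa [A, dist_eq_norm] using hty.le)
  obtain ⟨i | y, hi⟩ := nonempty_interior_of_iUnion_of_closed hAc hAU
  · exact absurd hi (by simp [A, interior_frontier (hcl _)])
  · exact ⟨_, isOpen_interior, hi, y, fun t ht => (interior_subset ht : t ∈ A (Sum.inr y))⟩

/-- In a compact space, a class of closed sets that is stable under intersections has minimal
nonempty members. -/
theorem exists_minimal_isClosed {Q : Type*} [TopologicalSpace Q] [CompactSpace Q]
    (P : Set Q → Prop) (hP : ∀ c : Set (Set Q), (∀ A ∈ c, P A) → P (⋂₀ c)) {A₀ : Set Q}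
    (hA₀ : A₀.Nonempty ∧ IsClosed A₀ ∧ P A₀) :
    ∃ A ⊆ A₀, Minimal (· ∈ {A : Set Q | A.Nonempty ∧ IsClosed A ∧ P A}) A := by
  refine zorn_superset_nonempty _ (fun c hc hchain hcne => ?_) A₀ hA₀
  refine ⟨⋂₀ c, ⟨?_, isClosed_sInter fun A hA => (hc hA).2.1, hP c fun A hA => (hc hA).2.2⟩,
    fun A hA => sInter_subset_of_mem hA⟩
  have := hcne.to_subtype
  exact IsCompact.nonempty_sInter_of_directed_nonempty_isCompact_isClosed
    (fun A hA B hB => by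
      rcases hchain.total hA hB with h | h
      · exact ⟨A, hA, Subset.rfl, h⟩
      · exact ⟨B, hB, h, Subset.rfl⟩)
    (fun A hA => (hc hA).1) (fun A hA => (hc hA).2.1.isCompact) (fun A hA => (hc hA).2.1)

/-- In a compact topological semigroup with a left invariant mean, the right ideals `p * T` have a
common point. -/
theorem nonempty_iInter_range_mul {T : Type*} [Semigroup T] [TopologicalSpace T] [CompactSpace T]
    [T2Space T] [ContinuousMul T] (ν : C(T, ℝ) →ₗ[ℝ] ℝ) (hν : ν 1 = 1)
    (hinv : ∀ (p : T) (f : C(T, ℝ)), ν (f.comp ⟨(p * ·), continuous_const_mul p⟩) = ν f) :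
    (⋂ p : T, range (p * ·)).Nonempty := by
  by_contra hemp
  rw [not_nonempty_iff_eq_empty] at hemp
  have hcl : ∀ p : T, IsClosed (range (p * ·)) := fun p =>
    (isCompact_range (continuous_const_mul p)).isClosed
  obtain ⟨u, hu⟩ := isCompact_univ.elim_finite_subfamily_closed (fun p : T => range (p * ·)) hcl
    (by rw [hemp, inter_empty])
  obtain ⟨f, hf⟩ := PartitionOfUnity.exists_isSubordinate (s := (univ : Set T)) isClosed_univ
    (fun p : u => (range ((p : T) * ·))ᶜ) (fun p => (hcl p).isOpen_compl) (by
      intro t ht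
      by_contra h
      simp only [mem_iUnion, not_exists, mem_compl_iff, not_not] at h
      have : t ∈ univ ∩ ⋂ p ∈ u, range (p * ·) :=
        ⟨ht, mem_iInter₂.2 fun p hp => h ⟨p, hp⟩⟩
      rw [hu] at this
      exact this)
  have hsum : ∑ p : u, f p = 1 := by
    ext t
    have h := f.sum_eq_one (mem_univ t)
    rw [finsum_eq_sum_of_fintype] at h
    simpa using h
  have hzero : ∀ p : u, ν (f p) = 0 := by
    intro p
    rw [← hinv p (f p)]
    convert map_zero ν
    ext t
    by_contra h
    exact hf p (subset_tsupport _ h) ⟨t, rfl⟩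
  rw [← hsum, map_sum, Finset.sum_eq_zero fun p _ => hzero p] at hν
  exact zero_ne_one hν

/-- A compact topological semigroup with a left invariant mean has a closed left ideal that is a
group. -/
theorem exists_isClosed_leftIdeal_group {T : Type*} [Semigroup T] [TopologicalSpace T]
    [CompactSpace T] [T2Space T] [ContinuousMul T] (ν : C(T, ℝ) →ₗ[ℝ] ℝ) (hν : ν 1 = 1)
    (hinv : ∀ (p : T) (f : C(T, ℝ)), ν (f.comp ⟨(p * ·), continuous_const_mul p⟩) = ν f) :
    ∃ (G : Set T) (e : T), IsClosed G ∧ e ∈ G ∧ (∀ g ∈ G, e * g = g ∧ g * e = g) ∧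
      (∀ g ∈ G, ∃ h ∈ G, g * h = e) ∧ ∀ s, ∀ g ∈ G, s * g ∈ G := by
  set R : Set T := ⋂ p : T, range (p * ·) with hR
  have hRne : R.Nonempty := nonempty_iInter_range_mul ν hν hinv
  have hRcl : IsClosed R := isClosed_iInter fun p =>
    (isCompact_range (continuous_const_mul p)).isClosed
  have hdvd : ∀ r ∈ R, ∀ p, ∃ t, p * t = r := fun r hr p => mem_iInter.1 hr p
  have hright : ∀ r ∈ R, ∀ t, r * t ∈ R := by
    refine fun r hr t => mem_iInter.2 fun p => ?_
    obtain ⟨q, rfl⟩ := hdvd r hr p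
    exact ⟨q * t, (mul_assoc _ _ _).symm⟩
  have hleft : ∀ q, ∀ r ∈ R, q * r ∈ R := by
    intro q r hr
    obtain ⟨b, hb⟩ := hdvd r hr (q * r)
    obtain ⟨t, ht⟩ := hdvd r hr (r * b)
    have h : q * r = r * t := by
      calc q * r = q * (r * b * t) := by rw [ht]
        _ = q * r * b * t := by simp only [mul_assoc]
        _ = r * t := by rw [hb]
    exact h ▸ hright r hr t
  obtain ⟨e, heR, hee⟩ := exists_idempotent_in_compact_subsemigroup
    (fun r : T => continuous_mul_const r) R hRne hRcl.isCompact fun x hx y _ => hright x hx y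
  have hel : ∀ r ∈ R, e * r = r := by
    intro r hr
    obtain ⟨t, rfl⟩ := hdvd r hr e
    rw [← mul_assoc, hee]
  refine ⟨R ∩ {g | g * e = g}, e, hRcl.inter (isClosed_eq (continuous_mul_const e) continuous_id),
    ⟨heR, hee⟩, fun g hg => ⟨hel g hg.1, hg.2⟩, fun g hg => ?_, fun s g hg =>
      ⟨hleft s g hg.1, by rw [mem_ofPred_eq, mul_assoc, hg.2]⟩⟩
  obtain ⟨t, ht⟩ := hdvd e heR g
  refine ⟨e * t * e, ⟨hright _ (hright _ heR _) _, ?_⟩, ?_⟩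
  · rw [mem_ofPred_eq, mul_assoc, hee]
  · rw [← mul_assoc, ← mul_assoc, hg.2, ht, hee]

/-- A compact Hausdorff group with continuous multiplication is a topological group. -/
theorem isTopologicalGroup_of_compactSpace {G : Type*} [Group G] [TopologicalSpace G]
    [CompactSpace G] [T2Space G] [ContinuousMul G] : IsTopologicalGroup G where
  continuous_inv := by
    let F : G × G ≃ G × G := Equiv.prodShear (Equiv.refl G) Equiv.mulLeft
    have hF : Continuous F := continuous_fst.prodMk (continuous_fst.mul continuous_snd)
    have h : Continuous F.symm := (hF.homeoOfEquivCompactToT2).symm.continuous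
    have h' : Continuous fun g : G => (F.symm (g, 1)).2 :=
      continuous_snd.comp (h.comp (continuous_id.prodMk continuous_const))
    simpa [F] using h'

/-- A weak* continuous isometric orbit of a compact group in the dual of an `M`-embedded space is
totally bounded in norm. -/
theorem totallyBounded_range_of_compact_group {X : Type*} [NormedAddCommGroup X] [NormedSpace ℝ X]
    (hM : MEmbeddedSpace X) {G : Type*} [Group G] [TopologicalSpace G] [CompactSpace G]
    [T2Space G] [ContinuousMul G] {φ : G → StrongDual ℝ X}
    (hφ : ∀ x, Continuous fun g => φ g x)
    (hne : ∀ g a b, ‖φ (g * a) - φ (g * b)‖ ≤ ‖φ a - φ b‖) :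
    TotallyBounded (range φ) := by
  have : IsTopologicalGroup G := isTopologicalGroup_of_compactSpace
  rw [Metric.totallyBounded_iff]
  by_contra! hcon
  obtain ⟨ε, hε, hcon⟩ := hcon
  obtain ⟨u, -, hu⟩ := exists_seq_of_forall_finset_exists (fun _ : G => True)
    (fun a b => ε ≤ ‖φ b - φ a‖) (by
      intro s _
      obtain ⟨_, ⟨b, rfl⟩, hb⟩ := not_subset.1 (hcon (φ '' s) (s.finite_toSet.image φ))
      refine ⟨b, trivial, fun a ha => ?_⟩
      by_contra h
      exact hb (mem_iUnion₂.2 ⟨φ a, mem_image_of_mem φ ha, by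
        simpa [dist_eq_norm] using h⟩))
  let Γ : Subgroup G := (FreeGroup.lift u).range
  let H : Subgroup G := Γ.topologicalClosure
  have hHcl : IsClosed (H : Set G) := Γ.isClosed_topologicalClosure
  have : CompactSpace H := isCompact_iff_compactSpace.1 hHcl.isCompact
  have hΓc : (Γ : Set G).Countable := by
    have : Countable (FreeGroup ℕ) := inferInstanceAs (Countable (Quot _))
    rw [MonoidHom.coe_range]
    exact countable_range _
  have hΓH : (Γ : Set G) ⊆ H := Γ.le_topologicalClosure
  let D : Set H := Subtype.val ⁻¹' (Γ : Set G)
  have hDc : D.Countable := hΓc.preimage Subtype.val_injective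
  have hD : Dense D := by
    intro h
    rw [IsInducing.subtypeVal.closure_eq_preimage_closure_image, mem_preimage]
    exact closure_mono (fun g hg => ⟨⟨g, hΓH hg⟩, hg, rfl⟩ : (Γ : Set G) ⊆ Subtype.val '' D) h.2
  obtain ⟨V, hVo, ⟨v, hv⟩, y, hy⟩ := exists_isOpen_subset_closedBall hM
    (φ := fun h : H => φ h) (fun x => (hφ x).comp continuous_subtype_val) hDc hD
    (show 0 < ε / 3 by positivity)
  let w : ℕ → H := fun n => ⟨u n, hΓH ⟨FreeGroup.of n, by simp⟩⟩
  obtain ⟨k, hk⟩ : ∃ k : H, MapClusterPt k atTop w := by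
    obtain ⟨k, -, hk⟩ := isCompact_univ (X := H) (f := map w atTop) (by simp)
    exact ⟨k, hk⟩
  have hW : ∀ᶠ h in 𝓝 k, v * k⁻¹ * h ∈ V :=
    (continuous_const_mul (v * k⁻¹)).continuousAt.eventually (hVo.mem_nhds (by simpa using hv))
  have hfreq := hk.frequently hW
  obtain ⟨m, -, hm⟩ := frequently_atTop.1 hfreq 0
  obtain ⟨n, hmn, hn⟩ := frequently_atTop.1 hfreq (m + 1)
  have hiso : ‖φ (u n) - φ (u m)‖ ≤ ‖φ (v * k⁻¹ * w n : H) - φ (v * k⁻¹ * w m : H)‖ := by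
    have h := hne ((v * k⁻¹ : H) : G)⁻¹ (v * k⁻¹ * w n : H) (v * k⁻¹ * w m : H)
    simpa [w, mul_assoc] using h
  have h1 := hy _ hm
  have h2 := hy _ hn
  have h3 := norm_sub_le_norm_sub_add_norm_sub (φ (v * k⁻¹ * w n : H)) y (φ (v * k⁻¹ * w m : H))
  rw [norm_sub_rev y] at h3
  have h4 := hu m n (by omega)
  linarith

/-- In a totally bounded set of positive diameter `d`, the average of a suitable finite subset is
at distance at most `r < d` from all the points of the set. -/
theorem exists_average_dist_le {E : Type*} [NormedAddCommGroup E] [NormedSpace ℝ E] {M : Set E}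
    (hM : TotallyBounded M) (hd : 0 < Metric.diam M) :
    ∃ u ∈ convexHull ℝ M, ∃ r < Metric.diam M, ∀ m ∈ M, ‖u - m‖ ≤ r := by
  classical
  set d := Metric.diam M
  have hb : Bornology.IsBounded M := hM.isBounded
  obtain ⟨t, htM, htf, hcov⟩ := Metric.finite_approx_of_totallyBounded hM (d / 2) (half_pos hd)
  lift t to Finset E using htf
  have hMne : M.Nonempty := by
    by_contra h
    rw [not_nonempty_iff_eq_empty] at h
    simp [d, h] at hd
  have htne : t.Nonempty := by
    obtain ⟨m, hm⟩ := hMne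
    obtain ⟨y, hy, -⟩ := mem_iUnion₂.1 (hcov hm)
    exact ⟨y, hy⟩
  have hn : (0 : ℝ) < t.card := by exact_mod_cast htne.card_pos
  have hw : ∑ _y ∈ t, (t.card : ℝ)⁻¹ = 1 := by
    rw [Finset.sum_const, nsmul_eq_mul, mul_inv_cancel₀ hn.ne']
  refine ⟨∑ y ∈ t, (t.card : ℝ)⁻¹ • y, (convex_convexHull ℝ M).sum_mem (fun _ _ => by positivity) hw
    fun y hy => subset_convexHull ℝ M (htM hy), d - (t.card : ℝ)⁻¹ * (d / 2), ?_, fun m hm => ?_⟩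
  · have : 0 < (t.card : ℝ)⁻¹ * (d / 2) := by positivity
    linarith
  · obtain ⟨y₀, hy₀, hmy⟩ := mem_iUnion₂.1 (hcov hm)
    have hsub : ∑ y ∈ t, (t.card : ℝ)⁻¹ • y - m = ∑ y ∈ t, (t.card : ℝ)⁻¹ • (y - m) := by
      simp_rw [smul_sub, Finset.sum_sub_distrib, ← Finset.sum_smul, hw, one_smul]
    have hle : ∀ y ∈ t, ‖(t.card : ℝ)⁻¹ • (y - m)‖ ≤
        (t.card : ℝ)⁻¹ * d - if y = y₀ then (t.card : ℝ)⁻¹ * (d / 2) else 0 := by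
      intro y hy
      rw [norm_smul, norm_inv, RCLike.norm_natCast, ← dist_eq_norm]
      split_ifs with h
      · rw [← mul_sub]
        have : dist y m ≤ d - d / 2 := by
          rw [h, dist_comm]
          linarith [Metric.mem_ball.1 hmy]
        gcongr
      · rw [sub_zero]
        gcongr
        exact Metric.dist_le_diam_of_mem hb (htM hy) hm
    rw [hsub]
    refine (norm_sum_le_of_le t hle).trans_eq ?_
    rw [Finset.sum_sub_distrib, ← Finset.sum_mul, hw, Finset.sum_ite_eq' t y₀, if_pos (Finset.mem_coe.1 hy₀), one_mul]

/-- A nonexpansive action of a compact semigroup with a left invariant mean has a fixed point in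
every nonempty weak* closed convex invariant set. -/
theorem exists_fixed_mem_of_isClosed {X : Type*} [NormedAddCommGroup X] [NormedSpace ℝ X]
    (hM : MEmbeddedSpace X) {T : Type*} [Semigroup T] [TopologicalSpace T]
    [CompactSpace T] [T2Space T] [ContinuousMul T] (ν : C(T, ℝ) →ₗ[ℝ] ℝ) (hν : ν 1 = 1)
    (hinv : ∀ (p : T) (f : C(T, ℝ)), ν (f.comp ⟨(p * ·), continuous_const_mul p⟩) = ν f)
    {Q : Type*} [TopologicalSpace Q] [CompactSpace Q] {ι : Q → StrongDual ℝ X}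
    (hι : Function.Injective ι) (hιc : ∀ x, Continuous fun q => ι q x)
    (hcv : Convex ℝ (range ι)) {act : T → Q → Q} (hact : ∀ q, Continuous fun p => act p q)
    (hmul : ∀ p p' q, act (p * p') q = act p (act p' q))
    (hne : ∀ p q q', ‖ι (act p q) - ι (act p q')‖ ≤ ‖ι q - ι q'‖)
    {C : Set Q} (hCne : C.Nonempty) (hCcl : IsClosed C) (hCact : ∀ p, MapsTo (act p) C C)
    (hCcv : Convex ℝ (ι '' C)) : ∃ q ∈ C, ∀ p, act p q = q := by
  obtain ⟨G, e, hGcl, heG, heg, hGinv, hGl⟩ := exists_isClosed_leftIdeal_group ν hν hinv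
  let P : Set Q → Prop := fun A => (∀ p, MapsTo (act p) A A) ∧ Convex ℝ (ι '' A)
  have hP : ∀ c : Set (Set Q), (∀ A ∈ c, P A) → P (⋂₀ c) := by
    refine fun c hc => ⟨fun p q hq A hA => (hc A hA).1 p (hq A hA), ?_⟩
    rintro _ ⟨x, hx, rfl⟩ _ ⟨y, hy, rfl⟩ a b ha hb hab
    obtain ⟨z, hz⟩ := hcv (mem_range_self x) (mem_range_self y) ha hb hab
    refine ⟨z, fun A hA => ?_, hz⟩
    obtain ⟨z', hz'A, hz'⟩ := (hc A hA).2 (mem_image_of_mem ι (hx A hA))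
      (mem_image_of_mem ι (hy A hA)) ha hb hab
    rwa [← hι (hz'.trans hz.symm)]
  obtain ⟨A, hAC, hAmin⟩ := exists_minimal_isClosed P hP ⟨hCne, hCcl, hCact, hCcv⟩
  obtain ⟨⟨x, hx⟩, hAcl, hAact, hAcv⟩ := hAmin.prop
  let φ : G → StrongDual ℝ X := fun g => ι (act g x)
  have hφA : range φ ⊆ ι '' A := by
    rintro _ ⟨g, rfl⟩
    exact mem_image_of_mem ι (hAact g hx)
  have htb : TotallyBounded (range φ) := by
    have : CompactSpace G := isCompact_iff_compactSpace.1 hGcl.isCompact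
    choose inv hinvG hmulinv using hGinv
    let _ : Mul G := ⟨fun a b => ⟨a * b, hGl a b b.2⟩⟩
    let _ : One G := ⟨⟨e, heG⟩⟩
    let _ : Inv G := ⟨fun a => ⟨inv a a.2, hinvG a a.2⟩⟩
    let _ : Group G := Group.ofRightAxioms (fun a b c => Subtype.ext (mul_assoc _ _ _))
      (fun a => Subtype.ext (heg a a.2).2) (fun a => Subtype.ext (hmulinv a a.2))
    have : ContinuousMul G := ⟨Continuous.subtype_mk
      ((continuous_subtype_val.comp continuous_fst).mul
        (continuous_subtype_val.comp continuous_snd)) _⟩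
    refine totallyBounded_range_of_compact_group hM
      (fun y => (hιc y).comp ((hact x).comp continuous_subtype_val)) fun g a b => ?_
    change ‖ι (act (g * a) x) - ι (act (g * b) x)‖ ≤ _
    rw [hmul, hmul]
    exact hne _ _ _
  rcases Metric.diam_nonneg.eq_or_lt (a := (0 : ℝ)) (b := Metric.diam (range φ)) with hd | hd
  · refine ⟨act e x, hAC (hAact e hx), fun p => ?_⟩
    rw [← hmul]
    have h := Metric.dist_le_diam_of_mem htb.isBounded (mem_range_self ⟨p * e, hGl p e heG⟩)
      (mem_range_self ⟨e, heG⟩)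
    rw [← hd] at h
    exact hι (dist_le_zero.1 h)
  · obtain ⟨u, hu, r, hr, hur⟩ := exists_average_dist_le htb hd
    let B : Set Q := A ∩ {q | ∀ g : G, ‖ι q - φ g‖ ≤ r}
    have hBcv : Convex ℝ (ι '' B) := by
      have : ι '' B = ι '' A ∩ ⋂ g : G, Metric.closedBall (φ g) r := by
        ext y
        simp only [B, mem_image, mem_inter_iff, mem_ofPred_eq, mem_iInter, mem_closedBall_iff_norm]
        constructor
        · rintro ⟨q, ⟨hq, hq'⟩, rfl⟩
          exact ⟨⟨q, hq, rfl⟩, hq'⟩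
        · rintro ⟨⟨q, hq, rfl⟩, hq'⟩
          exact ⟨q, ⟨hq, hq'⟩, rfl⟩
      rw [this]
      exact hAcv.inter (convex_iInter fun g => convex_closedBall _ _)
    have hB : B.Nonempty ∧ IsClosed B ∧ P B := by
      refine ⟨?_, ?_, fun p q hq => ⟨hAact p hq.1, fun g => ?_⟩, hBcv⟩
      · obtain ⟨q, hq, rfl⟩ := convexHull_min hφA hAcv hu
        exact ⟨q, hq, fun g => hur _ (mem_range_self g)⟩
      · refine hAcl.inter ?_
        rw [ofPred_forall]
        exact isClosed_iInter fun g => isClosed_norm_sub_le hιc (fun _ => continuous_const) r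
      · obtain ⟨h, hhG, hh⟩ := hGinv (p * e) (hGl p e heG)
        have hg : p * (h * g) = g := by
          rw [← mul_assoc, ← (heg h hhG).1, ← mul_assoc p, hh, (heg g g.2).1]
        have hφg : φ g = ι (act p (act (h * g) x)) := by rw [← hmul, hg]
        rw [hφg]
        exact (hne _ _ _).trans (hq.2 ⟨h * g, hGl h g g.2⟩)
    have hAB : A ⊆ B := hAmin.le_of_le hB inter_subset_left
    refine absurd hr (not_lt.2 (Metric.diam_le_of_forall_dist_le ?_ ?_))
    · exact (norm_nonneg _).trans (hur _ (mem_range_self ⟨e, heG⟩))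
    · rintro _ ⟨g, rfl⟩ _ ⟨g', rfl⟩
      rw [dist_eq_norm]
      exact (hAB (hAact g hx)).2 g'

/-- Bruck's construction: if a nonexpansive self-map semigroup has fixed points in every closed
convex invariant set, its fixed point set is a nonexpansive retract. -/
theorem exists_nonexpansive_retraction {X : Type*} [NormedAddCommGroup X] [NormedSpace ℝ X]
    {Q T : Type*} [TopologicalSpace Q] [CompactSpace Q] [T2Space Q] {ι : Q → StrongDual ℝ X}
    (hι : Function.Injective ι) (hιc : ∀ x, Continuous fun q => ι q x)
    (hcv : Convex ℝ (range ι)) {act : T → Q → Q}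
    (hne : ∀ p q q', ‖ι (act p q) - ι (act p q')‖ ≤ ‖ι q - ι q'‖)
    (hfix : ∀ C : Set Q, C.Nonempty → IsClosed C → (∀ p, MapsTo (act p) C C) →
      Convex ℝ (ι '' C) → ∃ q ∈ C, ∀ p, act p q = q) :
    ∃ r : Q → Q, (∀ q p, act p (r q) = r q) ∧ (∀ q, (∀ p, act p q = q) → r q = q) ∧
      ∀ q q', ‖ι (r q) - ι (r q')‖ ≤ ‖ι q - ι q'‖ := by
  let N : Set (Q → Q) := {f | (∀ q q', ‖ι (f q) - ι (f q')‖ ≤ ‖ι q - ι q'‖) ∧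
    ∀ q, (∀ p, act p q = q) → f q = q}
  have hNcl : IsClosed N := by
    simp only [N, ofPred_and, ofPred_forall]
    refine IsClosed.inter (isClosed_iInter fun q => isClosed_iInter fun q' => ?_)
      (isClosed_iInter fun q => isClosed_iInter fun _ =>
        isClosed_eq (continuous_apply q) continuous_const)
    exact isClosed_norm_sub_le (fun x => (hιc x).comp (continuous_apply q))
      (fun x => (hιc x).comp (continuous_apply q')) _
  have hNid : id ∈ N := ⟨fun _ _ => le_rfl, fun _ _ => rfl⟩
  have hNcomp : ∀ f ∈ N, ∀ g ∈ N, f ∘ g ∈ N := fun f hf g hg =>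
    ⟨fun q q' => (hf.1 _ _).trans (hg.1 _ _), fun q hq => by
      rw [Function.comp_apply, hg.2 q hq, hf.2 q hq]⟩
  have hNact : ∀ p, act p ∈ N := fun p => ⟨hne p, fun q hq => hq p⟩
  obtain ⟨L, hLN, hL⟩ := exists_minimal_isClosed (fun L => ∀ f ∈ N, ∀ g ∈ L, f ∘ g ∈ L)
    (fun c hc f hf g hg A hA => hc A hA f hf g (hg A hA)) ⟨⟨id, hNid⟩, hNcl, hNcomp⟩
  obtain ⟨⟨r, hr⟩, -, hLl⟩ := hL.prop
  refine ⟨r, fun z => ?_, (hLN hr).2, (hLN hr).1⟩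
  obtain ⟨_, ⟨f, hf, rfl⟩, hfz⟩ := hfix ((fun f : Q → Q => f (r z)) '' N) ⟨_, id, hNid, rfl⟩
    (hNcl.isCompact.image (continuous_apply (r z))).isClosed
    (by
      rintro p _ ⟨f, hf, rfl⟩
      exact ⟨act p ∘ f, hNcomp _ (hNact p) _ hf, rfl⟩)
    (by
      rintro _ ⟨_, ⟨f, hf, rfl⟩, rfl⟩ _ ⟨_, ⟨g, hg, rfl⟩, rfl⟩ a b ha hb hab
      choose k hk using fun q => hcv (mem_range_self (f q)) (mem_range_self (g q)) ha hb hab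
      refine ⟨_, ⟨k, ⟨fun q q' => ?_, fun q hq => hι ?_⟩, rfl⟩, hk _⟩
      · have h : ι (k q) - ι (k q') = a • (ι (f q) - ι (f q')) + b • (ι (g q) - ι (g q')) := by
          rw [hk, hk]
          module
        calc ‖ι (k q) - ι (k q')‖
            ≤ ‖a • (ι (f q) - ι (f q'))‖ + ‖b • (ι (g q) - ι (g q'))‖ := h ▸ norm_add_le _ _
          _ = a * ‖ι (f q) - ι (f q')‖ + b * ‖ι (g q) - ι (g q')‖ := by
            rw [norm_smul, norm_smul, Real.norm_of_nonneg ha, Real.norm_of_nonneg hb]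
          _ ≤ a * ‖ι q - ι q'‖ + b * ‖ι q - ι q'‖ := by
            gcongr
            exacts [hf.1 q q', hg.1 q q']
          _ = ‖ι q - ι q'‖ := by rw [← add_mul, hab, one_mul]
      · rw [hk, hf.2 q hq, hg.2 q hq, ← add_smul, hab, one_smul])
  have hsub : L ⊆ (fun g : Q → Q => g ∘ (f ∘ r)) '' N := by
    refine hL.le_of_le ⟨⟨_, id, hNid, rfl⟩, ?_, ?_⟩ ?_
    · exact (hNcl.isCompact.image
        (continuous_pi fun q => continuous_apply ((f ∘ r) q))).isClosed
    · rintro h hh _ ⟨g, hg, rfl⟩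
      exact ⟨h ∘ g, hNcomp _ hh _ hg, rfl⟩
    · rintro _ ⟨g, hg, rfl⟩
      exact hLl g hg _ (hLl f hf r hr)
  obtain ⟨g, hg, hgr⟩ := hsub hr
  have hrz : r z = f (r z) := by
    calc r z = g (f (r z)) := (congrFun hgr z).symm
      _ = f (r z) := hg.2 _ hfz
  rw [hrz]
  exact hfz

/-- A left invariant mean on `AP(S)` transports to any compact topological semigroup in which `S`
maps densely. -/
theorem exists_mean_of_denseRange {S : Type*} [Semigroup S] [TopologicalSpace S]
    (hLIM : HasLIM S (APset S)) {T : Type*} [Semigroup T] [TopologicalSpace T] [CompactSpace T]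
    [ContinuousMul T] {j : S → T} (hj : Continuous j) (hjm : ∀ s t, j (s * t) = j s * j t)
    (hd : DenseRange j) :
    ∃ ν : C(T, ℝ) →ₗ[ℝ] ℝ, ν 1 = 1 ∧
      ∀ (p : T) (f : C(T, ℝ)), ν (f.comp ⟨(p * ·), continuous_const_mul p⟩) = ν f := by
  obtain ⟨μ, -, hμ1, hμ⟩ := hLIM
  let Φ : C(T, ℝ) → S →ᵇ ℂ := fun f =>
    (mkOfCompact ((⟨Complex.ofReal, Complex.continuous_ofReal⟩ : C(ℝ, ℂ)).comp f)).compContinuous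
      ⟨j, hj⟩
  have hΦapp : ∀ f s, Φ f s = (f (j s) : ℂ) := fun _ _ => rfl
  have hΦ : Continuous Φ := by
    refine LipschitzWith.continuous (K := 1) (LipschitzWith.of_dist_le_mul fun f g => ?_)
    rw [NNReal.coe_one, one_mul, BoundedContinuousFunction.dist_le dist_nonneg]
    intro s
    rw [hΦapp, hΦapp, Complex.dist_of_im_eq (by simp)]
    simpa using ContinuousMap.dist_apply_le_dist (f := f) (g := g) (j s)
  let L : C(T, ℝ) → T → C(T, ℝ) := fun f p => f.comp ⟨(p * ·), continuous_const_mul p⟩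
  have hL : ∀ f, Continuous (L f) := fun f =>
    ContinuousMap.continuous_of_continuous_uncurry _ (f.continuous.comp continuous_mul)
  let ν : C(T, ℝ) →ₗ[ℝ] ℝ :=
    { toFun := fun f => (μ (Φ f)).re
      map_add' := fun f g => by
        have : Φ (f + g) = Φ f + Φ g := by
          ext s
          simp [hΦapp]
        rw [this, map_add, Complex.add_re]
      map_smul' := fun c f => by
        have : Φ (c • f) = (c : ℂ) • Φ f := by
          ext s
          simp [hΦapp]
        rw [this, map_smul]
        simp }
  have hν : Continuous ν := Complex.continuous_re.comp (μ.continuous.comp hΦ)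
  refine ⟨ν, ?_, fun p f => ?_⟩
  · have : Φ 1 = 1 := by
      ext s
      simp [hΦapp]
    change (μ (Φ 1)).re = 1
    rw [this, hμ1, Complex.one_re]
  · have htr : IsLTranslates S (Φ f) fun s => Φ (L f (j s)) := fun s t => by
      simp [hΦapp, L, hjm]
    have hAP : Φ f ∈ APset S := by
      refine ⟨_, htr, (isCompact_range (hΦ.comp (hL f))).closure_of_subset ?_⟩
      rintro _ ⟨s, rfl⟩
      exact ⟨j s, rfl⟩
    refine hd.induction_on (p := fun p => ν (L f p) = ν f) p
      (isClosed_eq (hν.comp (hL f)) continuous_const) fun s => ?_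
    exact congrArg Complex.re (hμ _ hAP _ htr s)

/-- Evaluation is jointly continuous on an equicontinuous set of maps with the topology of
pointwise convergence. -/
theorem Set.Equicontinuous.continuous_eval {Y Q : Type*} [TopologicalSpace Y] [UniformSpace Q]
    {A : Set (Y → Q)} (hA : A.Equicontinuous) : Continuous fun z : A × Y => z.1.1 z.2 := by
  refine continuous_iff_continuousAt.2 fun ⟨p, y⟩ => Uniform.tendsto_nhds_right.2 fun V hV => ?_
  obtain ⟨W, hW, hWV⟩ := comp_mem_uniformity_sets hV
  have h1 : ∀ᶠ p' : A in 𝓝 p, (p.1 y, p'.1 y) ∈ W :=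
    Uniform.tendsto_nhds_right.1 (((continuous_apply y).comp continuous_subtype_val).tendsto p) hW
  exact (h1.prod_nhds (hA y W hW)).mono fun z h => hWV ⟨_, h.1, h.2 z.1⟩

/-- A nonexpansive equicontinuous action on a weak* compact convex set of functionals on an
`M`-embedded space has a nonexpansive retraction onto its fixed point set, provided `AP(S)` has a
left invariant mean. -/
theorem exists_retraction_of_equicontinuous {S : Type*} [Semigroup S] [TopologicalSpace S]
    (hLIM : HasLIM S (APset S)) {X : Type*} [NormedAddCommGroup X] [NormedSpace ℝ X]
    (hM : MEmbeddedSpace X) {Q : Type*} [UniformSpace Q] [CompactSpace Q] [T2Space Q]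
    {ι : Q → StrongDual ℝ X} (hι : Function.Injective ι) (hιc : ∀ x, Continuous fun q => ι q x)
    (hcv : Convex ℝ (range ι)) {F : S → Q → Q} (hF : Equicontinuous F)
    (horb : ∀ q, Continuous fun s => F s q) (hmul : ∀ s t q, F (s * t) q = F s (F t q))
    (hne : ∀ s q q', ‖ι (F s q) - ι (F s q')‖ ≤ ‖ι q - ι q'‖) :
    ∃ r : Q → Q, (∀ q s, F s (r q) = r q) ∧ (∀ q, (∀ s, F s q = q) → r q = q) ∧
      ∀ q q', ‖ι (r q) - ι (r q')‖ ≤ ‖ι q - ι q'‖ := by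
  let A : Set (Q → Q) := closure (range F)
  have hFA : ∀ s, F s ∈ A := fun s => subset_closure (mem_range_self s)
  have hA : A.Equicontinuous := (equicontinuous_iff_range.1 hF).closure
  have hind : ∀ P : (Q → Q) → Prop, IsClosed {f | P f} → (∀ s, P (F s)) → ∀ f ∈ A, P f := by
    intro P hP hPF f hf
    refine closure_minimal ?_ hP hf
    rintro _ ⟨s, rfl⟩
    exact hPF s
  have hcomp : ∀ f ∈ A, ∀ g ∈ A, f ∘ g ∈ A := by
    have hleft : ∀ s, ∀ g ∈ A, F s ∘ g ∈ A := by
      intro s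
      refine hind _ (isClosed_closure.preimage (continuous_pi fun q =>
        (hF.continuous s).comp (continuous_apply q))) fun t => ?_
      rw [← show F (s * t) = F s ∘ F t from funext (hmul s t)]
      exact hFA _
    intro f hf g hg
    exact hind (fun f => f ∘ g ∈ A) (isClosed_closure.preimage (continuous_pi fun q =>
      continuous_apply (g q))) (fun s => hleft s g hg) f hf
  have : CompactSpace A := isCompact_iff_compactSpace.1 isClosed_closure.isCompact
  let _ : Semigroup A :=
    { mul := fun f g => ⟨f.1 ∘ g.1, hcomp f.1 f.2 g.1 g.2⟩
      mul_assoc := fun _ _ _ => rfl }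
  have : ContinuousMul A := ⟨Continuous.subtype_mk (continuous_pi fun q =>
    hA.continuous_eval.comp (continuous_fst.prodMk
      ((continuous_apply q).comp (continuous_subtype_val.comp continuous_snd)))) _⟩
  obtain ⟨ν, hν, hνinv⟩ := exists_mean_of_denseRange hLIM (T := A) (j := fun s => ⟨F s, hFA s⟩)
    (Continuous.subtype_mk (continuous_pi horb) _) (fun s t => Subtype.ext (funext (hmul s t)))
    (by
      intro f
      rw [IsInducing.subtypeVal.closure_eq_preimage_closure_image, ← range_comp]
      exact f.2)
  have hneA : ∀ (p : A) q q', ‖ι (p.1 q) - ι (p.1 q')‖ ≤ ‖ι q - ι q'‖ := fun p q q' =>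
    hind (fun f => ‖ι (f q) - ι (f q')‖ ≤ ‖ι q - ι q'‖)
      (isClosed_norm_sub_le (fun x => (hιc x).comp (continuous_apply q))
        (fun x => (hιc x).comp (continuous_apply q')) _) (fun s => hne s q q') p.1 p.2
  obtain ⟨r, hr, hrfix, hrne⟩ := exists_nonexpansive_retraction hι hιc hcv hneA
    fun C hCne hCcl hCact hCcv => exists_fixed_mem_of_isClosed hM ν hν hνinv hι hιc hcv
      (fun q => (continuous_apply q).comp continuous_subtype_val) (fun _ _ _ => rfl) hneA
      hCne hCcl hCact hCcv
  exact ⟨r, fun q s => hr q ⟨F s, hFA s⟩, fun q hq => hrfix q fun p =>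
    hind (fun f => f q = q) (isClosed_eq (continuous_apply q) continuous_const) hq p.1 p.2, hrne⟩

/-- A set of functionals, as a type carrying the weak* uniform structure. -/
@[ext]
structure WStarSubset {X : Type*} [NormedAddCommGroup X] [NormedSpace ℝ X]
    (K : Set (StrongDual ℝ X)) where
  /-- the underlying functional -/
  val : StrongDual ℝ X
  property : val ∈ K

instance {X : Type*} [NormedAddCommGroup X] [NormedSpace ℝ X] (K : Set (StrongDual ℝ X)) :
    UniformSpace (WStarSubset K) :=
  UniformSpace.comap (fun q (x : X) => q.val x) inferInstance

theorem WStarSubset.range_val {X : Type*} [NormedAddCommGroup X] [NormedSpace ℝ X]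
    (K : Set (StrongDual ℝ X)) : range (WStarSubset.val : WStarSubset K → StrongDual ℝ X) = K :=
  Subset.antisymm (range_subset_iff.2 fun q => q.property) fun x hx => ⟨⟨x, hx⟩, rfl⟩

/-- **Theorem (M), case (i)**: a nonexpansive dynamical system `(S,(K,weak*))` on a weak*
compact convex subset of the dual of an `M`-embedded Banach space, with weak* equicontinuous
translations, has a common fixed point provided `AP(S)` has a left invariant mean; moreover the
fixed point set is a nonexpansive retract of `K`. -/
theorem fixedPoint_and_retract_MEmbedded_of_AP_hasLIM
    {S : Type u} [Semigroup S] [TopologicalSpace S] [T2Space S]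
    (hS : IsSemitopologicalSemigroup S)
    {X : Type v} [NormedAddCommGroup X] [NormedSpace ℝ X] [CompleteSpace X]
    -- `X` is an `M`-embedded Banach space
    (hM : MEmbeddedSpace X)
    (K : Set (StrongDual ℝ X)) (π : S → StrongDual ℝ X → StrongDual ℝ X)
    -- `K` is a nonempty weak* compact convex set
    (hKne : K.Nonempty) (hKcv : Convex ℝ K) (hKcpt : @IsCompact _ (wstarTop X) K)
    -- `(S,(K,weak*))` is a dynamical system
    (hinv : ∀ s : S, MapsTo (π s) K K)
    (hact : ∀ s t : S, ∀ x ∈ K, π (s * t) x = π s (π t x))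
    (horb : ∀ x ∈ K, @Continuous S _ _ (wstarTop X) fun s => π s x)
    (htra : ∀ s : S, @ContinuousOn _ _ (wstarTop X) (wstarTop X) (π s) K)
    -- the system is nonexpansive
    (hne : ∀ s : S, ∀ x ∈ K, ∀ y ∈ K, ‖π s x - π s y‖ ≤ ‖x - y‖)
    -- the translations are equicontinuous in the weak* topology
    (hequi : ∀ x ∈ K, ∀ V ∈ @nhds _ (wstarTop X) (0 : StrongDual ℝ X),
      ∃ U ∈ @nhds _ (wstarTop X) x, ∀ s : S, ∀ y ∈ U ∩ K, π s y - π s x ∈ V)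
    -- the amenability hypothesis
    (hLIM : HasLIM S (APset S)) :
    -- `S` has a fixed point in `K` ...
    (∃ x ∈ K, ∀ s : S, π s x = x) ∧
    -- ... and `F(S)` is a nonexpansive retract of `K`
    ∃ r : StrongDual ℝ X → StrongDual ℝ X,
      (∀ x ∈ K, r x ∈ K ∧ ∀ s : S, π s (r x) = r x) ∧
      (∀ x ∈ K, r (r x) = r x) ∧
      (∀ x ∈ K, (∀ s : S, π s x = x) → r x = x) ∧
      (∀ x ∈ K, ∀ y ∈ K, ‖r x - r y‖ ≤ ‖x - y‖) := by
  have hev : IsInducing fun (q : WStarSubset K) (x : X) => q.val x := ⟨rfl⟩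
  have hindK : @IsInducing (WStarSubset K) _ _ (wstarTop X) WStarSubset.val := by
    let _ : TopologicalSpace (StrongDual ℝ X) := wstarTop X
    exact ⟨hev.eq_induced.trans induced_compose.symm⟩
  have hcpt : CompactSpace (WStarSubset K) := by
    let _ : TopologicalSpace (StrongDual ℝ X) := wstarTop X
    refine ⟨hindK.isCompact_iff.2 ?_⟩
    rwa [image_univ, WStarSubset.range_val]
  have hinj : Function.Injective fun (q : WStarSubset K) (x : X) => q.1 x := fun p q h =>
    WStarSubset.ext (ContinuousLinearMap.ext (congrFun h))
  have hT2 : T2Space (WStarSubset K) := T2Space.of_injective_continuous hinj hev.continuous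
  let F : S → WStarSubset K → WStarSubset K := fun s q => ⟨π s q.1, hinv s q.2⟩
  have hF : Equicontinuous F := by
    intro q U hU
    obtain ⟨V, hV, hVU⟩ := mem_comap.1 hU
    rw [uniformity_eq_comap_nhds_zero] at hV
    obtain ⟨W, hW, hWV⟩ := mem_comap.1 hV
    obtain ⟨B, hB, hBW⟩ := hequi q.1 q.2 {f | (fun x => f x) ∈ W}
      (by
        rw [wstarTop, nhds_induced]
        exact preimage_mem_comap hW)
    have hBq : ∀ᶠ q' in 𝓝 q, q'.val ∈ B := by
      let _ : TopologicalSpace (StrongDual ℝ X) := wstarTop X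
      exact hindK.continuous.continuousAt.eventually hB
    filter_upwards [hBq] with q' hq' s
    exact hVU (hWV (hBW s q'.1 ⟨hq', q'.2⟩))
  obtain ⟨r, hr, hrfix, hrne⟩ := exists_retraction_of_equicontinuous hLIM hM
    (ι := fun q : WStarSubset K => q.val) (fun _ _ => WStarSubset.ext)
    (fun x => (continuous_apply x).comp hev.continuous)
    ((WStarSubset.range_val K).symm ▸ hKcv) hF
    (fun q => by
      let _ : TopologicalSpace (StrongDual ℝ X) := wstarTop X
      exact hindK.continuous_iff.2 (horb q.1 q.2))
    (fun s t q => WStarSubset.ext (hact s t q.1 q.2)) fun s q q' => hne s q.1 q.2 q'.1 q'.2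
  classical
  have hrS : ∀ q s, π s (r q).1 = (r q).1 := fun q s => congrArg WStarSubset.val (hr q s)
  obtain ⟨x₀, hx₀⟩ := hKne
  refine ⟨⟨(r ⟨x₀, hx₀⟩).1, (r ⟨x₀, hx₀⟩).2, hrS _⟩,
    fun x => if h : x ∈ K then (r ⟨x, h⟩).1 else x, ?_, ?_, ?_, ?_⟩
  · intro x hx
    simp only [dif_pos hx]
    exact ⟨(r ⟨x, hx⟩).2, hrS _⟩
  · intro x hx
    simp only [dif_pos hx, dif_pos (r ⟨x, hx⟩).2]
    exact congrArg WStarSubset.val (hrfix (r ⟨x, hx⟩) (hr _))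
  · intro x hx hfix
    simp only [dif_pos hx]
    exact congrArg WStarSubset.val (hrfix ⟨x, hx⟩ fun s => WStarSubset.ext (hfix s))
  · intro x hx y hy
    simp only [dif_pos hx, dif_pos hy]
    exact hrne _ _
end
end
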